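/- There exist bounded measurable functions u, B: ℝ³×ℝ → ℝ³ and p: ℝ³×ℝ → ℝ, with (u,B) not equal to zero almost everywhere, and a bounded time interval I such that u(·,t) = 0 and B(·,t) = 0 for almost every t ∉ I, satisfying the weak formulation of the three-dimensional ideal incompressible magnetohydrodynamics equations: for every Ψ ∈ C_c^∞(ℝ³×ℝ;ℝ³), ∫∫ (u·∂_tΨ + (u⊗u − B⊗B):∇_xΨ + p div_xΨ) dx dt = 0; for every Φ ∈ C_c^∞(ℝ³×ℝ;ℝ³), ∫∫ (B·∂_tΦ + (u×B)·curl_xΦ) dx dt = 0; and for every φ ∈ C_c^∞(ℝ³×ℝ;ℝ), ∫∫ u·∇_xφ dx dt = 0 and ∫∫ B·∇_xφ dx dt = 0. In particular, bounded weak solutions of the ideal 3D MHD equations are not unique. -/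

import Mathlib

/-!
The solution has `B = 0` and a velocity which is planar and independent of the third space variable, so
it is enough to find a bounded, compactly supported weak solution of the two-dimensional Euler equations
with `|v| = 1` on a cube of space-time; it comes from convex integration.

Write the Euler equations as the linear system `div v = 0`, `∂ₜ v + div S = 0` for `(v, S)` with `S`
symmetric, together with the pointwise constraint `S = v ⊗ v + p I`. The constraint only concerns the
four quantities `(v₀, v₁, S₀₀ - S₁₁, S₀₁)`, and it holds at the five vertices `vert i` of a 4-simplex
having `0` in its interior, the vertices lying over points of the unit circle. Any two vertices are
joined by a plane-wave direction of the linear system (`waveVec_eq`), and such waves can be localized by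
a potential (`wave_pde`, `osc_est`).

Starting from `0`, each step adds to a smooth subsolution with values in the open simplex a wave of very
high frequency joining two vertices `i`, `j`, with amplitude `χ bᵢ bⱼ / 2` in terms of the barycentric
coordinates `b` and a cutoff `χ` (`step_pair`, `step_all`). By the Riemann–Lebesgue lemma the increments
are almost orthogonal in `L²` to all previous iterates; as the iterates are bounded, the sequence is
Cauchy in `L²` (`cauchy_of_almost_orthogonal`). Hence the increments, and with them the amplitudes, tend
to zero, the limit satisfies `bᵢ bⱼ = 0` for `i ≠ j`, and so it is a vertex almost everywhere in the
support (`exists_limit`, `exists_euler`). The trace of `S`, which carries the pressure, changes by at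
most `2⁻ⁿ` in step `n` and converges uniformly. The linear system passes to the limit in the weak form
(`weak_limit`), while the limit satisfies the nonlinear constraint.
-/

open MeasureTheory Filter Topology

noncomputable section

/-- Cross product of two vectors in `ℝ³`. -/
def cross3 (a c : Fin 3 → ℝ) : Fin 3 → ℝ :=
  ![a 1 * c 2 - a 2 * c 1, a 2 * c 0 - a 0 * c 2, a 0 * c 1 - a 1 * c 0]

/-- Spatial curl of a vector field `Φ : ℝ³ × ℝ → ℝ³` (the last coordinate is time). -/
noncomputable def curlx (Φ : (Fin 3 → ℝ) × ℝ → Fin 3 → ℝ) (y : (Fin 3 → ℝ) × ℝ) :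
    Fin 3 → ℝ :=
  ![fderiv ℝ Φ y (Pi.single 1 1, (0 : ℝ)) 2 - fderiv ℝ Φ y (Pi.single 2 1, (0 : ℝ)) 1,
    fderiv ℝ Φ y (Pi.single 2 1, (0 : ℝ)) 0 - fderiv ℝ Φ y (Pi.single 0 1, (0 : ℝ)) 2,
    fderiv ℝ Φ y (Pi.single 0 1, (0 : ℝ)) 1 - fderiv ℝ Φ y (Pi.single 1 1, (0 : ℝ)) 0]

/-! ### Partial derivatives and oscillating potentials -/

/-- Planar space-time, with coordinates `(x₀, x₁, t)`; coordinate `2` is time. It carries the sup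
norm, which is harmless since only boundedness of sets matters. -/
abbrev Spt : Type := Fin 3 → ℝ

/-- The partial derivative `∂_m f`. -/
def pd (m : Fin 3) (f : Spt → ℝ) : Spt → ℝ := fun y => fderiv ℝ f y (Pi.single m 1)

lemma pd_contDiff (m : Fin 3) {f : Spt → ℝ} (hf : ContDiff ℝ (⊤ : ℕ∞) f) :
    ContDiff ℝ (⊤ : ℕ∞) (pd m f) :=
  (hf.fderiv_right (by simp)).clm_apply contDiff_const

lemma contDiff_diff {f : Spt → ℝ} (hf : ContDiff ℝ (⊤ : ℕ∞) f) : Differentiable ℝ f :=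
  hf.differentiable (by simp)

lemma pd_comm (m n : Fin 3) {f : Spt → ℝ} (hf : ContDiff ℝ (⊤ : ℕ∞) f) :
    pd m (pd n f) = pd n (pd m f) := by
  funext y
  have hd : DifferentiableAt ℝ (fderiv ℝ f) y :=
    ((hf.fderiv_right (m := (⊤ : ℕ∞)) (by simp)).differentiable (by simp)) y
  have key : ∀ m n : Fin 3, pd m (pd n f) y
      = fderiv ℝ (fderiv ℝ f) y (Pi.single m 1) (Pi.single n 1) := by
    intro m n
    unfold pd
    rw [fderiv_clm_apply hd (differentiableAt_const _)]
    simp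
  rw [key, key]
  have hs : IsSymmSndFDerivAt ℝ f y :=
    hf.contDiffAt.isSymmSndFDerivAt (by
      simp only [minSmoothness_of_isRCLikeNormedField]
      exact WithTop.coe_le_coe.2 (le_top : (2 : ℕ∞) ≤ ⊤))
  exact hs _ _

lemma pd_add (m : Fin 3) {f g : Spt → ℝ} (hf : ContDiff ℝ (⊤ : ℕ∞) f)
    (hg : ContDiff ℝ (⊤ : ℕ∞) g) (y : Spt) :
    pd m (fun y => f y + g y) y = pd m f y + pd m g y := by
  unfold pd
  rw [fderiv_fun_add (contDiff_diff hf y) (contDiff_diff hg y)]; rfl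

lemma pd_mul (m : Fin 3) {f g : Spt → ℝ} (hf : ContDiff ℝ (⊤ : ℕ∞) f)
    (hg : ContDiff ℝ (⊤ : ℕ∞) g) (y : Spt) :
    pd m (fun y => f y * g y) y = pd m f y * g y + f y * pd m g y := by
  unfold pd
  rw [fderiv_fun_mul (contDiff_diff hf y) (contDiff_diff hg y)]
  simp; ring

lemma pd_const_mul (m : Fin 3) (c : ℝ) {f : Spt → ℝ} (hf : ContDiff ℝ (⊤ : ℕ∞) f) (y : Spt) :
    pd m (fun y => c * f y) y = c * pd m f y := by
  unfold pd
  rw [fderiv_const_mul (contDiff_diff hf y)]; rfl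

lemma pd_comb (m : Fin 3) (c d : ℝ) {f g : Spt → ℝ} (hf : ContDiff ℝ (⊤ : ℕ∞) f)
    (hg : ContDiff ℝ (⊤ : ℕ∞) g) (y : Spt) :
    pd m (fun y => c * f y + d * g y) y = c * pd m f y + d * pd m g y := by
  rw [pd_add m (contDiff_const.mul hf) (contDiff_const.mul hg), pd_const_mul m c hf,
    pd_const_mul m d hg]

lemma pd_eq_zero (m : Fin 3) {f : Spt → ℝ} {B : Set Spt} (hB : IsClosed B)
    (hf : ∀ y, y ∉ B → f y = 0) : ∀ y, y ∉ B → pd m f y = 0 := by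
  intro y hy
  have : f =ᶠ[𝓝 y] fun _ => 0 := by
    filter_upwards [hB.isOpen_compl.mem_nhds hy] with z hz using hf z hz
  unfold pd
  rw [this.fderiv_eq]; simp

/-- The linear phase `ξ · y`. -/
def phase (ξ : Fin 3 → ℝ) (y : Spt) : ℝ := ξ 0 * y 0 + ξ 1 * y 1 + ξ 2 * y 2

lemma phase_contDiff (ξ : Fin 3 → ℝ) : ContDiff ℝ (⊤ : ℕ∞) (phase ξ) := by
  unfold phase; fun_prop

lemma hasFDerivAt_phase (ξ : Fin 3 → ℝ) (y : Spt) : ∃ L : Spt →L[ℝ] ℝ,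
    HasFDerivAt (phase ξ) L y ∧ ∀ m, L (Pi.single m 1) = ξ m := by
  refine ⟨ξ 0 • ContinuousLinearMap.proj 0 + ξ 1 • ContinuousLinearMap.proj 1
    + ξ 2 • ContinuousLinearMap.proj 2, ?_, ?_⟩
  · unfold phase
    exact (((ContinuousLinearMap.proj (R := ℝ) (φ := fun _ : Fin 3 => ℝ) 0).hasFDerivAt.const_mul _).add
      ((ContinuousLinearMap.proj (R := ℝ) (φ := fun _ : Fin 3 => ℝ) 1).hasFDerivAt.const_mul _)).add
      ((ContinuousLinearMap.proj (R := ℝ) (φ := fun _ : Fin 3 => ℝ) 2).hasFDerivAt.const_mul _)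
  · intro m; fin_cases m <;> simp

lemma pd_cos (ξ : Fin 3 → ℝ) (l : ℝ) (m : Fin 3) (y : Spt) :
    pd m (fun y => Real.cos (l * phase ξ y)) y = -(l * ξ m) * Real.sin (l * phase ξ y) := by
  obtain ⟨L, hL, hm⟩ := hasFDerivAt_phase ξ y
  unfold pd
  rw [((hL.const_mul l).cos).fderiv]
  simp [hm]; ring

lemma pd_sin (ξ : Fin 3 → ℝ) (l : ℝ) (m : Fin 3) (y : Spt) :
    pd m (fun y => Real.sin (l * phase ξ y)) y = (l * ξ m) * Real.cos (l * phase ξ y) := by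
  obtain ⟨L, hL, hm⟩ := hasFDerivAt_phase ξ y
  unfold pd
  rw [((hL.const_mul l).sin).fderiv]
  simp [hm]; ring

/-- The oscillating potential `-l⁻² a(y) cos(l ξ·y)`, normalized so that its Hessian is
`ξ ⊗ ξ a cos(l ξ·y)` up to `O(1/l)` (see `osc_est`). -/
def osc (ξ : Fin 3 → ℝ) (a : Spt → ℝ) (l : ℝ) : Spt → ℝ :=
  fun y => (-(l ^ 2)⁻¹) * (a y * Real.cos (l * phase ξ y))

lemma cos_contDiff (ξ : Fin 3 → ℝ) (l : ℝ) :
    ContDiff ℝ (⊤ : ℕ∞) fun y => Real.cos (l * phase ξ y) :=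
  Real.contDiff_cos.comp (contDiff_const.mul (phase_contDiff ξ))

lemma sin_contDiff (ξ : Fin 3 → ℝ) (l : ℝ) :
    ContDiff ℝ (⊤ : ℕ∞) fun y => Real.sin (l * phase ξ y) :=
  Real.contDiff_sin.comp (contDiff_const.mul (phase_contDiff ξ))

lemma osc_contDiff (ξ : Fin 3 → ℝ) {a : Spt → ℝ} (ha : ContDiff ℝ (⊤ : ℕ∞) a) (l : ℝ) :
    ContDiff ℝ (⊤ : ℕ∞) (osc ξ a l) :=
  contDiff_const.mul (ha.mul (cos_contDiff ξ l))

lemma pd_pd_osc (ξ : Fin 3 → ℝ) {a : Spt → ℝ} (ha : ContDiff ℝ (⊤ : ℕ∞) a) {l : ℝ} (hl : l ≠ 0)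
    (m n : Fin 3) (y : Spt) :
    pd m (pd n (osc ξ a l)) y = ξ m * ξ n * (a y * Real.cos (l * phase ξ y))
      + (l⁻¹ * ((ξ m * pd n a y + ξ n * pd m a y) * Real.sin (l * phase ξ y))
        - (l ^ 2)⁻¹ * (pd m (pd n a) y * Real.cos (l * phase ξ y))) := by
  have h1 : pd n (osc ξ a l) = fun y => (-(l ^ 2)⁻¹) * (pd n a y * Real.cos (l * phase ξ y))
      + (l⁻¹ * ξ n) * (a y * Real.sin (l * phase ξ y)) := by
    funext y
    unfold osc
    rw [pd_const_mul n _ (ha.mul (cos_contDiff ξ l)), pd_mul n ha (cos_contDiff ξ l), pd_cos]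
    field_simp
    ring
  rw [h1, pd_comb m _ _ ((pd_contDiff n ha).mul (cos_contDiff ξ l)) (ha.mul (sin_contDiff ξ l)),
    pd_mul m (pd_contDiff n ha) (cos_contDiff ξ l), pd_mul m ha (sin_contDiff ξ l), pd_cos, pd_sin]
  field_simp
  ring

lemma bdd_of_supp {f : Spt → ℝ} {B : Set Spt} (hB : IsCompact B) (hf : Continuous f)
    (h0 : ∀ y, y ∉ B → f y = 0) : ∃ C, 0 ≤ C ∧ ∀ y, |f y| ≤ C := by
  obtain ⟨C, hC⟩ := hB.exists_bound_of_continuousOn hf.continuousOn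
  refine ⟨max C 0, le_max_right _ _, fun y => ?_⟩
  by_cases hy : y ∈ B
  · exact (hC y hy).trans (le_max_left _ _)
  · simp [h0 y hy]

/-- The error terms in `pd_pd_osc` carry at least one factor `1/l` and bounded derivatives of the
compactly supported amplitude. -/
lemma osc_est (ξ : Fin 3 → ℝ) {a : Spt → ℝ} (ha : ContDiff ℝ (⊤ : ℕ∞) a) {B : Set Spt}
    (hB : IsCompact B) (h0 : ∀ y, y ∉ B → a y = 0) :
    ∃ C, 0 ≤ C ∧ ∀ l, 1 ≤ l → ∀ m n y,
      |pd m (pd n (osc ξ a l)) y - ξ m * ξ n * (a y * Real.cos (l * phase ξ y))| ≤ C / l := by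
  have hb1 : ∀ m : Fin 3, ∃ C, 0 ≤ C ∧ ∀ y, |pd m a y| ≤ C := fun m =>
    bdd_of_supp hB (pd_contDiff m ha).continuous (pd_eq_zero m hB.isClosed h0)
  have hb2 : ∀ m n : Fin 3, ∃ C, 0 ≤ C ∧ ∀ y, |pd m (pd n a) y| ≤ C := fun m n =>
    bdd_of_supp hB (pd_contDiff m (pd_contDiff n ha)).continuous
      (pd_eq_zero m hB.isClosed (pd_eq_zero n hB.isClosed h0))
  choose C1 hC1 hC1' using hb1
  choose C2 hC2 hC2' using hb2
  have key : ∀ m n : Fin 3, ∀ l, 1 ≤ l → ∀ y,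
      |pd m (pd n (osc ξ a l)) y - ξ m * ξ n * (a y * Real.cos (l * phase ξ y))|
        ≤ (|ξ m| * C1 n + |ξ n| * C1 m + C2 m n) / l := by
    intro m n l hl y
    have hl0 : 0 < l := by linarith
    rw [pd_pd_osc ξ ha hl0.ne', add_sub_cancel_left]
    have e1 : |(ξ m * pd n a y + ξ n * pd m a y) * Real.sin (l * phase ξ y)|
        ≤ |ξ m| * C1 n + |ξ n| * C1 m := by
      rw [abs_mul]
      calc _ ≤ |ξ m * pd n a y + ξ n * pd m a y| * 1 := by
              gcongr; exact Real.abs_sin_le_one _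
        _ ≤ |ξ m| * |pd n a y| + |ξ n| * |pd m a y| := by
              rw [mul_one, ← abs_mul, ← abs_mul]; exact abs_add_le _ _
        _ ≤ _ := by gcongr <;> apply hC1'
    have e2 : |pd m (pd n a) y * Real.cos (l * phase ξ y)| ≤ C2 m n := by
      rw [abs_mul]
      calc _ ≤ |pd m (pd n a) y| * 1 := by
              gcongr; exact Real.abs_cos_le_one _
        _ ≤ _ := by rw [mul_one]; apply hC2'
    have hl2 : (l ^ 2)⁻¹ ≤ l⁻¹ := by
      apply inv_anti₀ hl0; nlinarith
    calc _ ≤ |l⁻¹ * ((ξ m * pd n a y + ξ n * pd m a y) * Real.sin (l * phase ξ y))|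
          + |(l ^ 2)⁻¹ * (pd m (pd n a) y * Real.cos (l * phase ξ y))| := abs_sub _ _
      _ ≤ l⁻¹ * (|ξ m| * C1 n + |ξ n| * C1 m) + l⁻¹ * C2 m n := by
          rw [abs_mul l⁻¹, abs_mul (l ^ 2)⁻¹, abs_of_pos (inv_pos.2 hl0),
            abs_of_pos (by positivity : 0 < (l ^ 2)⁻¹)]
          gcongr
      _ = _ := by field_simp
  refine ⟨∑ m, ∑ n, (|ξ m| * C1 n + |ξ n| * C1 m + C2 m n), ?_, ?_⟩
  · refine Finset.sum_nonneg fun m _ => Finset.sum_nonneg fun n _ => ?_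
    have := hC1 m; have := hC1 n; have := hC2 m n; positivity
  · intro l hl m n y
    have hl0 : 0 < l := by linarith
    refine (key m n l hl y).trans ?_
    gcongr
    have hnn : ∀ m n, 0 ≤ |ξ m| * C1 n + |ξ n| * C1 m + C2 m n := by
      intro m n; have := hC1 m; have := hC1 n; have := hC2 m n; positivity
    calc _ ≤ ∑ n, (|ξ m| * C1 n + |ξ n| * C1 m + C2 m n) :=
          Finset.single_le_sum (f := fun n => |ξ m| * C1 n + |ξ n| * C1 m + C2 m n)
            (fun n _ => hnn m n) (Finset.mem_univ n)
      _ ≤ _ := Finset.single_le_sum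
            (f := fun m => ∑ n, (|ξ m| * C1 n + |ξ n| * C1 m + C2 m n))
            (fun m _ => Finset.sum_nonneg fun n _ => hnn m n) (Finset.mem_univ m)

/-- Riemann–Lebesgue lemma for real plane waves in a fixed direction, deduced from the statement
for the Fourier transform along `cocompact`. -/
lemma riemann_lebesgue {ξ : Fin 3 → ℝ} (hξ : ξ ≠ 0) {f : Spt → ℝ} (hf : Integrable f) :
    Tendsto (fun l : ℝ => ∫ y, f y * Real.cos (l * phase ξ y)) atTop (𝓝 0) := by
  obtain ⟨L, hL⟩ : ∃ L : Spt →L[ℝ] ℝ, ∀ y, L y = phase ξ y :=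
    ⟨ξ 0 • ContinuousLinearMap.proj 0 + ξ 1 • ContinuousLinearMap.proj 1
      + ξ 2 • ContinuousLinearMap.proj 2, fun y => by simp [phase]⟩
  have hL0 : L ≠ 0 := by
    rintro rfl
    apply hξ
    funext m
    have := hL (Pi.single m 1)
    fin_cases m <;> simpa [phase] using this.symm
  have h := tendsto_integral_exp_smul_cocompact (fun y => (f y : ℂ)) (volume : Measure Spt)
  have hw : Tendsto (fun l : ℝ => (l / (2 * Real.pi)) • L) atTop
      (cocompact (StrongDual ℝ Spt)) := by
    rw [← Metric.cobounded_eq_cocompact, ← tendsto_norm_atTop_iff_cobounded]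
    simp_rw [norm_smul]
    apply Tendsto.atTop_mul_const (norm_pos_iff.2 hL0)
    exact tendsto_norm_atTop_atTop.comp (tendsto_id.atTop_div_const (by positivity))
  have h2 := (Complex.continuous_re.tendsto _).comp (h.comp hw)
  rw [Complex.zero_re] at h2
  refine h2.congr fun l => ?_
  simp only [Function.comp_apply]
  have hint : Integrable fun v : Spt =>
      Real.fourierChar (-((l / (2 * Real.pi)) • L) v) • (f v : ℂ) := by
    refine (hf.ofReal (𝕜 := ℂ)).mono ?_ (Eventually.of_forall fun v => by simp)
    refine AEStronglyMeasurable.smul ?_ hf.ofReal.aestronglyMeasurable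
    apply Continuous.aestronglyMeasurable
    fun_prop
  have := integral_re hint
  simp only [RCLike.re_to_complex] at this
  rw [← this]
  congr 1
  funext v
  rw [Circle.smul_def, Real.fourierChar_apply, smul_eq_mul, Complex.re_mul_ofReal, mul_comm]
  congr 1
  have : (2 * Real.pi * (-((l / (2 * Real.pi)) • L) v) : ℝ) = -(l * phase ξ v) := by
    simp [hL]; field_simp
  rw [this, Complex.exp_ofReal_mul_I_re, Real.cos_neg]

/-! ### The simplex of states and its wave directions -/

/-- First velocity components of the five vertices `(1,0)`, `(0,±1)`, `(-4/5,±3/5)`: points of the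
unit circle, with rational coordinates, for which `0` is interior to the simplex below. -/
def vx : Fin 5 → ℝ := ![1, 0, 0, -4/5, -4/5]
/-- Second velocity components of the five vertices. -/
def vy : Fin 5 → ℝ := ![0, 1, -1, 3/5, -3/5]

/-- Linear part of the barycentric coordinates of a state `z = (v₀, v₁, S₀₀, S₀₁, S₁₁)` relative to
the simplex spanned by the images of the vertices in `(v₀, v₁, S₀₀ - S₁₁, S₀₁)`-space. Only these four
quantities enter: the trace of `S` is left free. -/
def blin (z : Fin 5 → ℝ) : Fin 5 → ℝ :=
  ![(5 * (z 2 - z 4) + 8 * z 0) / 18,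
    ((2 * z 0 - 5 * (z 2 - z 4)) / 8 + z 1 + 5 * z 3 / 4) / 2,
    ((2 * z 0 - 5 * (z 2 - z 4)) / 8 - z 1 - 5 * z 3 / 4) / 2,
    (25 * (z 2 - z 4 - 2 * z 0) / 72 - 25 * z 3 / 12) / 2,
    (25 * (z 2 - z 4 - 2 * z 0) / 72 + 25 * z 3 / 12) / 2]

/-- Barycentric coordinates of the zero state; all are positive. -/
def bwt : Fin 5 → ℝ := ![5/18, 3/16, 3/16, 25/144, 25/144]

/-- The `k`-th barycentric coordinate of the state `z`. -/
def bary (z : Fin 5 → ℝ) (k : Fin 5) : ℝ := bwt k + blin z k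

lemma bary_sum (z : Fin 5 → ℝ) : ∑ k, bary z k = 1 := by
  simp [Fin.sum_univ_five, bary, bwt, blin]; ring

lemma bary_vx (z : Fin 5 → ℝ) : z 0 = ∑ k, bary z k * vx k := by
  simp [Fin.sum_univ_five, bary, bwt, blin, vx]; ring

lemma bary_vy (z : Fin 5 → ℝ) : z 1 = ∑ k, bary z k * vy k := by
  simp [Fin.sum_univ_five, bary, bwt, blin, vy]; ring

lemma bary_diff (z : Fin 5 → ℝ) : z 2 - z 4 = ∑ k, bary z k * (vx k ^ 2 - vy k ^ 2) := by
  simp [Fin.sum_univ_five, bary, bwt, blin, vx, vy]; ring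

lemma bary_off (z : Fin 5 → ℝ) : z 3 = ∑ k, bary z k * (vx k * vy k) := by
  simp [Fin.sum_univ_five, bary, bwt, blin, vx, vy]; ring

lemma bary_add (z w : Fin 5 → ℝ) (k : Fin 5) :
    bary (fun l => z l + w l) k = bary z k + blin w k := by
  fin_cases k <;> simp [bary, bwt, blin] <;> ring

lemma blin_est {z w : Fin 5 → ℝ} {e : ℝ} (h : ∀ l, |z l - w l| ≤ e) (k : Fin 5) :
    |blin z k - blin w k| ≤ 10 * e := by
  have h0 := abs_le.1 (h 0); have h1 := abs_le.1 (h 1); have h2 := abs_le.1 (h 2)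
  have h3 := abs_le.1 (h 3); have h4 := abs_le.1 (h 4)
  fin_cases k <;> simp only [blin] <;> simp <;> rw [abs_le] <;> constructor <;> linarith

/-- Space-time frequency of the plane wave joining the vertices `i` and `j`: the spatial part is
orthogonal to the velocity difference, and the time component makes the momentum equation hold. -/
def freq (i j : Fin 5) : Fin 3 → ℝ :=
  ![-(vy i - vy j), vx i - vx j, vx j * vy i - vx i * vy j]

/-- With `pot2`, the coefficients of the potential for which the plane wave of frequency `freq i j` has
amplitude `vert i - vert j`. -/
def pot1 (i j : Fin 5) : ℝ := -(vx i - vx j) / ((vx i - vx j) ^ 2 + (vy i - vy j) ^ 2)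
/-- See `pot1`. -/
def pot2 (i j : Fin 5) : ℝ := -(vy i - vy j) / ((vx i - vx j) ^ 2 + (vy i - vy j) ^ 2)

/-- Algebraic form of a second-order operator: when `H` is the Hessian of a function, the result solves
`div v = 0`, `∂ₜ v + div S = 0` identically (see `wave_pde`). -/
def waveVec (c₁ c₂ : ℝ) (H : Fin 3 → Fin 3 → ℝ) : Fin 5 → ℝ :=
  ![c₂ * H 0 1 + -c₁ * H 1 1, -c₂ * H 0 0 + c₁ * H 0 1, -2 * c₂ * H 1 2,
    c₂ * H 0 2 + c₁ * H 1 2, -2 * c₁ * H 0 2]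

lemma waveVec_est (c₁ c₂ : ℝ) {H K : Fin 3 → Fin 3 → ℝ} {e : ℝ}
    (h : ∀ m n, |H m n - K m n| ≤ e) (l : Fin 5) :
    |waveVec c₁ c₂ H l - waveVec c₁ c₂ K l| ≤ 2 * (|c₁| + |c₂|) * e := by
  have key : ∀ c m n, |c * (H m n - K m n)| ≤ |c| * e := fun c m n => by
    rw [abs_mul]; gcongr; exact h m n
  have he : 0 ≤ e := (abs_nonneg _).trans (h 0 0)
  have p1 : 0 ≤ |c₁| * e := by positivity
  have p2 : 0 ≤ |c₂| * e := by positivity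
  have a1 := abs_le.1 (key c₁ 1 1); have a2 := abs_le.1 (key c₁ 0 1)
  have a3 := abs_le.1 (key c₁ 1 2); have a4 := abs_le.1 (key c₁ 0 2)
  have b1 := abs_le.1 (key c₂ 0 1); have b2 := abs_le.1 (key c₂ 0 0)
  have b3 := abs_le.1 (key c₂ 1 2); have b4 := abs_le.1 (key c₂ 0 2)
  fin_cases l <;> simp only [waveVec] <;> simp <;> rw [abs_le] <;> constructor <;> linarith

lemma vertex_inj {i j : Fin 5} (h1 : vx i = vx j) (h2 : vy i = vy j) : i = j := by
  revert h1 h2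
  fin_cases i <;> fin_cases j <;> simp [vx, vy] <;> norm_num

lemma vertex_unit (i : Fin 5) : vx i ^ 2 + vy i ^ 2 = 1 := by
  fin_cases i <;> simp [vx, vy] <;> norm_num

lemma dist_ne {i j : Fin 5} (h : i ≠ j) : (vx i - vx j) ^ 2 + (vy i - vy j) ^ 2 ≠ 0 := by
  intro h0
  apply h
  apply vertex_inj
  · nlinarith [sq_nonneg (vx i - vx j), sq_nonneg (vy i - vy j)]
  · nlinarith [sq_nonneg (vx i - vx j), sq_nonneg (vy i - vy j)]

lemma freq_ne {i j : Fin 5} (h : i ≠ j) : freq i j ≠ 0 := by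
  intro h0
  have h1 := congrFun h0 0
  have h2 := congrFun h0 1
  simp only [freq, Matrix.cons_val_zero, Matrix.cons_val_one, Pi.zero_apply] at h1 h2
  exact h (vertex_inj (by linarith) (by linarith))

/-- Change of the `k`-th barycentric coordinate when moving from vertex `j` to vertex `i`. -/
def sgn (i j k : Fin 5) : ℝ := (if k = i then 1 else 0) - (if k = j then 1 else 0)

/-- The state `(v, v ⊗ v)` at the vertex `i`. -/
def vert (i : Fin 5) : Fin 5 → ℝ := ![vx i, vy i, vx i ^ 2, vx i * vy i, vy i ^ 2]

lemma blin_vert (i j k : Fin 5) (s : ℝ) :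
    blin (fun l => (vert i l - vert j l) * s) k = sgn i j k * s := by
  have h : ∀ i k, blin (vert i) k = (if k = i then 1 else 0) - bwt k := by
    intro i k
    fin_cases i <;> fin_cases k <;> simp [blin, vert, vx, vy, bwt] <;> norm_num
  have h2 : blin (fun l => (vert i l - vert j l) * s) k = (blin (vert i) k - blin (vert j) k) * s := by
    fin_cases k <;> simp [blin] <;> ring
  rw [h2, h, h, sgn]; ring

/-- Any two vertices are joined by a wave direction: the plane wave of frequency `freq i j` oscillates
exactly along `vert i - vert j`. This uses that all vertex velocities have the same length. -/
lemma waveVec_eq {i j : Fin 5} (h : i ≠ j) (s : ℝ) :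
    waveVec (pot1 i j) (pot2 i j) (fun m n => freq i j m * freq i j n * s)
      = fun l => (vert i l - vert j l) * s := by
  have hd := dist_ne h
  have ui := vertex_unit i
  have uj := vertex_unit j
  funext l
  fin_cases l <;> simp [waveVec, pot1, pot2, freq, vert] <;>
    generalize vx i = a at * <;> generalize vy i = b at * <;>
    generalize vx j = c at * <;> generalize vy j = d at * <;> field_simp <;> grind

lemma wave_lead {i j : Fin 5} (h : i ≠ j) (s : ℝ) (k : Fin 5) :
    blin (waveVec (pot1 i j) (pot2 i j) (fun m n => freq i j m * freq i j n * s)) k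
      = sgn i j k * s := by
  rw [waveVec_eq h, blin_vert]

/-- Plane waves joining two vertices leave the trace of `S` unchanged, since `|v|² = 1` at both. -/
lemma wave_trace {i j : Fin 5} (s : ℝ) :
    waveVec (pot1 i j) (pot2 i j) (fun m n => freq i j m * freq i j n * s) 2
      + waveVec (pot1 i j) (pot2 i j) (fun m n => freq i j m * freq i j n * s) 4 = 0 := by
  simp [waveVec, pot1, pot2, freq]; ring

/-! ### Subsolutions and the oscillation step -/

/-- The common space-time support: the closed ball of radius `2` in the sup norm, i.e. a cube. -/
def Bset : Set Spt := Metric.closedBall (0 : Spt) 2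

lemma Bset_compact : IsCompact Bset := isCompact_closedBall _ _

lemma exists_cutoff : ∃ χ : Spt → ℝ, ContDiff ℝ (⊤ : ℕ∞) χ ∧ (∀ y, 0 ≤ χ y) ∧ (∀ y, χ y ≤ 1) ∧
    (∀ y, y ∉ Bset → χ y = 0) ∧ (∀ y ∈ Metric.ball (0 : Spt) 2, χ y ≠ 0) := by
  let f : ContDiffBump (0 : Spt) := ⟨1, 2, by norm_num, by norm_num⟩
  refine ⟨f, f.contDiff, fun y => f.nonneg, fun y => f.le_one, fun y hy => ?_, fun y hy => ?_⟩
  · apply f.zero_of_le_dist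
    have : ¬ dist y 0 ≤ 2 := hy
    exact (not_le.1 this).le
  · exact ne_of_gt (f.pos_of_mem_ball hy)

/-- A smooth strict subsolution `Z = (v₀, v₁, S₀₀, S₀₁, S₁₁)`: supported in `Bset`, solving
`div v = 0` and `∂ₜ v + div S = 0`, and with values in the open simplex. Outside `Bset` the state is `0`,
which is an interior point of the simplex. -/
structure Good (Z : Fin 5 → Spt → ℝ) : Prop where
  smooth : ∀ l, ContDiff ℝ (⊤ : ℕ∞) (Z l)
  supp : ∀ l y, y ∉ Bset → Z l y = 0
  pos : ∀ y k, 0 < bary (fun l => Z l y) k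
  div : ∀ y, pd 0 (Z 0) y + pd 1 (Z 1) y = 0
  mom0 : ∀ y, pd 2 (Z 0) y + pd 0 (Z 2) y + pd 1 (Z 3) y = 0
  mom1 : ∀ y, pd 2 (Z 1) y + pd 0 (Z 3) y + pd 1 (Z 4) y = 0

lemma good_zero : Good (fun _ _ => 0) where
  smooth := fun _ => contDiff_const
  supp := fun _ _ _ => rfl
  pos := fun y k => by fin_cases k <;> simp [bary, blin, bwt]
  div := fun y => by simp [pd]
  mom0 := fun y => by simp [pd]
  mom1 := fun y => by simp [pd]

lemma blin_contDiff {Z : Fin 5 → Spt → ℝ} (h : ∀ l, ContDiff ℝ (⊤ : ℕ∞) (Z l)) (k : Fin 5) :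
    ContDiff ℝ (⊤ : ℕ∞) fun y => blin (fun l => Z l y) k := by
  have h0 := h 0; have h1 := h 1; have h2 := h 2; have h3 := h 3; have h4 := h 4
  fin_cases k <;> simp only [blin] <;> simp <;> fun_prop

lemma bary_contDiff {Z : Fin 5 → Spt → ℝ} (h : ∀ l, ContDiff ℝ (⊤ : ℕ∞) (Z l)) (k : Fin 5) :
    ContDiff ℝ (⊤ : ℕ∞) fun y => bary (fun l => Z l y) k := by
  unfold bary
  exact contDiff_const.add (blin_contDiff h k)

lemma Good.le_one {Z : Fin 5 → Spt → ℝ} (h : Good Z) (y : Spt) (k : Fin 5) :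
    bary (fun l => Z l y) k ≤ 1 := by
  rw [← bary_sum (fun l => Z l y)]
  exact Finset.single_le_sum (f := fun k => bary (fun l => Z l y) k)
    (fun i _ => (h.pos y i).le) (Finset.mem_univ k)

/-- The state field generated by the potential `g`. -/
def wave (c₁ c₂ : ℝ) (g : Spt → ℝ) (l : Fin 5) : Spt → ℝ :=
  fun y => waveVec c₁ c₂ (fun m n => pd m (pd n g) y) l

lemma wave_contDiff (c₁ c₂ : ℝ) {g : Spt → ℝ} (hg : ContDiff ℝ (⊤ : ℕ∞) g) (l : Fin 5) :
    ContDiff ℝ (⊤ : ℕ∞) (wave c₁ c₂ g l) := by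
  have h : ∀ m n, ContDiff ℝ (⊤ : ℕ∞) (pd m (pd n g)) := fun m n =>
    pd_contDiff m (pd_contDiff n hg)
  have h00 := h 0 0; have h01 := h 0 1; have h11 := h 1 1; have h02 := h 0 2; have h12 := h 1 2
  unfold wave
  fin_cases l <;> simp only [waveVec] <;> simp <;> fun_prop

lemma wave_supp (c₁ c₂ : ℝ) {g : Spt → ℝ} (hg : ∀ y, y ∉ Bset → g y = 0) (l : Fin 5) (y : Spt)
    (hy : y ∉ Bset) : wave c₁ c₂ g l y = 0 := by
  have hB := Bset_compact.isClosed
  have h : ∀ m n, pd m (pd n g) y = 0 := fun m n =>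
    pd_eq_zero m hB (pd_eq_zero n hB hg) y hy
  fin_cases l <;> simp [wave, waveVec, h]

lemma wave_pde (c₁ c₂ : ℝ) {g : Spt → ℝ} (hg : ContDiff ℝ (⊤ : ℕ∞) g) (y : Spt) :
    pd 0 (wave c₁ c₂ g 0) y + pd 1 (wave c₁ c₂ g 1) y = 0 ∧
    pd 2 (wave c₁ c₂ g 0) y + pd 0 (wave c₁ c₂ g 2) y + pd 1 (wave c₁ c₂ g 3) y = 0 ∧
    pd 2 (wave c₁ c₂ g 1) y + pd 0 (wave c₁ c₂ g 3) y + pd 1 (wave c₁ c₂ g 4) y = 0 := by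
  have h : ∀ m n, ContDiff ℝ (⊤ : ℕ∞) (pd m (pd n g)) := fun m n =>
    pd_contDiff m (pd_contDiff n hg)
  have e0 : wave c₁ c₂ g 0 = fun y => c₂ * pd 0 (pd 1 g) y + -c₁ * pd 1 (pd 1 g) y := rfl
  have e1 : wave c₁ c₂ g 1 = fun y => -c₂ * pd 0 (pd 0 g) y + c₁ * pd 0 (pd 1 g) y := rfl
  have e2 : wave c₁ c₂ g 2 = fun y => (-2 * c₂) * pd 1 (pd 2 g) y := rfl
  have e3 : wave c₁ c₂ g 3 = fun y => c₂ * pd 0 (pd 2 g) y + c₁ * pd 1 (pd 2 g) y := rfl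
  have e4 : wave c₁ c₂ g 4 = fun y => (-2 * c₁) * pd 0 (pd 2 g) y := rfl
  have s10 : ∀ n, pd 1 (pd 0 (pd n g)) = pd 0 (pd 1 (pd n g)) := fun n =>
    pd_comm 1 0 (pd_contDiff n hg)
  have s20 : ∀ n, pd 2 (pd 0 (pd n g)) = pd 0 (pd 2 (pd n g)) := fun n =>
    pd_comm 2 0 (pd_contDiff n hg)
  have s21 : ∀ n, pd 2 (pd 1 (pd n g)) = pd 1 (pd 2 (pd n g)) := fun n =>
    pd_comm 2 1 (pd_contDiff n hg)
  have t10 : pd 1 (pd 0 g) = pd 0 (pd 1 g) := pd_comm 1 0 hg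
  have t20 : pd 2 (pd 0 g) = pd 0 (pd 2 g) := pd_comm 2 0 hg
  have t21 : pd 2 (pd 1 g) = pd 1 (pd 2 g) := pd_comm 2 1 hg
  rw [e0, e1, e2, e3, e4]
  simp only [pd_comb _ _ _ (h _ _) (h _ _), pd_const_mul _ _ (h _ _), s10, s20, s21, t10, t20, t21]
  refine ⟨by ring, by ring, by ring⟩

/-- Integrals over `Bset` of functions that are `O(1/l)`-close to `f cos(l ξ·y)` tend to zero. -/
lemma osc_limit {ξ : Fin 3 → ℝ} (hξ : ξ ≠ 0) {f : Spt → ℝ} (hf : Continuous f)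
    {F : ℝ → Spt → ℝ} (hF : ∀ l, Continuous (F l)) {C : ℝ}
    (h : ∀ l, 1 ≤ l → ∀ y ∈ Bset, |F l y - f y * Real.cos (l * phase ξ y)| ≤ C / l) :
    Tendsto (fun l => ∫ y in Bset, F l y) atTop (𝓝 0) := by
  have hcos : ∀ l, Continuous fun y => f y * Real.cos (l * phase ξ y) := fun l =>
    hf.mul (cos_contDiff ξ l).continuous
  have h1 : Tendsto (fun l => ∫ y in Bset, f y * Real.cos (l * phase ξ y)) atTop (𝓝 0) := by
    have hi : Integrable (Bset.indicator f) :=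
      (integrable_indicator_iff Bset_compact.measurableSet).2
        (hf.continuousOn.integrableOn_compact Bset_compact)
    refine (riemann_lebesgue hξ hi).congr fun l => ?_
    rw [← integral_indicator Bset_compact.measurableSet]
    congr 1
    funext y
    by_cases hy : y ∈ Bset <;> simp [hy]
  have h2 : Tendsto (fun l => ∫ y in Bset, (F l y - f y * Real.cos (l * phase ξ y))) atTop
      (𝓝 0) := by
    have hlim : Tendsto (fun l : ℝ => C / l * volume.real Bset) atTop (𝓝 0) := by
      have := (tendsto_const_nhds (x := C)).div_atTop (tendsto_id (α := ℝ) (x := atTop))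
      simpa using this.mul_const (volume.real Bset)
    refine squeeze_zero_norm' ?_ hlim
    filter_upwards [eventually_ge_atTop 1] with l hl
    exact norm_setIntegral_le_of_norm_le_const Bset_compact.measure_lt_top
      (fun y hy => h l hl y hy)
  have h3 := h2.add h1
  rw [add_zero] at h3
  refine h3.congr fun l => ?_
  rw [← integral_add]
  · simp
  · exact ((hF l).sub (hcos l)).continuousOn.integrableOn_compact Bset_compact
  · exact (hcos l).continuousOn.integrableOn_compact Bset_compact

lemma sgn_abs (i j k : Fin 5) : |sgn i j k| ≤ 1 := by
  unfold sgn; split_ifs <;> simp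

lemma sgn_sq {i j : Fin 5} (h : i ≠ j) : ∑ k, sgn i j k ^ 2 = 2 := by
  fin_cases i <;> fin_cases j <;> simp [sgn, Fin.sum_univ_five] at h ⊢ <;> norm_num

/-- Adding to a subsolution a wave of high frequency joining the vertices `i` and `j`, of amplitude
`χ bᵢ bⱼ / 2` in barycentric coordinates `b`, gives a subsolution with almost the same trace of `S`. The
increment of the coordinates is almost orthogonal in `L²` to finitely many prescribed fields `G r`, and
its squared norm is at least that of the amplitude, up to `ε`. -/
lemma step_pair {χ : Spt → ℝ} (hχ : ContDiff ℝ (⊤ : ℕ∞) χ) (hχ0 : ∀ y, 0 ≤ χ y)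
    (hχ1 : ∀ y, χ y ≤ 1) (hχB : ∀ y, y ∉ Bset → χ y = 0)
    {Z : Fin 5 → Spt → ℝ} (hZ : Good Z) {i j : Fin 5} (hij : i ≠ j)
    (N : ℕ) (G : ℕ → Fin 5 → Spt → ℝ) (hG : ∀ r k, Continuous (G r k)) {ε : ℝ} (hε : 0 < ε) :
    ∃ Z', Good Z' ∧ (∀ y, |(Z' 2 y + Z' 4 y) - (Z 2 y + Z 4 y)| ≤ ε) ∧
      (∀ r ≤ N, |∫ y in Bset, ∑ k, (bary (fun l => Z' l y) k - bary (fun l => Z l y) k) * G r k y|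
        ≤ ε) ∧
      ∫ y in Bset, (χ y * bary (fun l => Z l y) i * bary (fun l => Z l y) j / 2) ^ 2 ≤
        (∫ y in Bset, ∑ k, (bary (fun l => Z' l y) k - bary (fun l => Z l y) k) ^ 2) + ε := by
  set b : Fin 5 → Spt → ℝ := fun k y => bary (fun l => Z l y) k with hb
  have hbs : ∀ k, ContDiff ℝ (⊤ : ℕ∞) (b k) := fun k => bary_contDiff hZ.smooth k
  have hbp : ∀ k y, 0 < b k y := fun k y => hZ.pos y k
  have hb1 : ∀ k y, b k y ≤ 1 := fun k y => hZ.le_one y k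
  set a : Spt → ℝ := fun y => χ y * b i y * b j y / 2 with ha_def
  have ha : ContDiff ℝ (⊤ : ℕ∞) a := ((hχ.mul (hbs i)).mul (hbs j)).div_const 2
  have haB : ∀ y, y ∉ Bset → a y = 0 := fun y hy => by simp [ha_def, hχB y hy]
  have ha0 : ∀ y, 0 ≤ a y := fun y => by
    have := hχ0 y; have := hbp i y; have := hbp j y; simp only [ha_def]; positivity
  have hai : ∀ y, a y ≤ b i y / 2 := fun y => by
    have h1 : χ y * b j y ≤ 1 := mul_le_one₀ (hχ1 y) (hbp j y).le (hb1 j y)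
    have := mul_le_mul_of_nonneg_left h1 (hbp i y).le
    simp only [ha_def]; linarith
  have haj : ∀ y, a y ≤ b j y / 2 := fun y => by
    have h1 : χ y * b i y ≤ 1 := mul_le_one₀ (hχ1 y) (hbp i y).le (hb1 i y)
    have := mul_le_mul_of_nonneg_left h1 (hbp j y).le
    simp only [ha_def]; linarith
  have ha1 : ∀ y, a y ≤ 1 := fun y => by have := hai y; have := hb1 i y; linarith
  set ξ := freq i j with hξ_def
  have hξ : ξ ≠ 0 := freq_ne hij
  obtain ⟨C₀, hC₀, hest⟩ := osc_est ξ ha Bset_compact haB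
  set c₁ := pot1 i j
  set c₂ := pot2 i j
  set W : ℝ → Fin 5 → Spt → ℝ := fun l => wave c₁ c₂ (osc ξ a l) with hW
  have hWs : ∀ l k, ContDiff ℝ (⊤ : ℕ∞) (W l k) := fun l k =>
    wave_contDiff c₁ c₂ (osc_contDiff ξ ha l) k
  have hWB : ∀ l k y, y ∉ Bset → W l k y = 0 := fun l k y hy =>
    wave_supp c₁ c₂ (fun y hy => by simp [osc, haB y hy]) k y hy
  set C₁ := 2 * (|c₁| + |c₂|) * C₀ with hC₁
  have hC₁0 : 0 ≤ C₁ := by positivity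
  -- deviation of the perturbation from the exact plane wave
  have hdev : ∀ l, 1 ≤ l → ∀ y k, |W l k y - waveVec c₁ c₂
      (fun m n => ξ m * ξ n * (a y * Real.cos (l * phase ξ y))) k| ≤ C₁ / l := by
    intro l hl y k
    have := waveVec_est c₁ c₂ (fun m n => hest l hl m n y) k
    calc _ ≤ _ := this
      _ = _ := by rw [hC₁]; ring
  set C := 10 * C₁ with hC
  have hC0 : 0 ≤ C := by positivity
  have hbl : ∀ l, 1 ≤ l → ∀ y k, |blin (fun k => W l k y) k
      - sgn i j k * (a y * Real.cos (l * phase ξ y))| ≤ C / l := by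
    intro l hl y k
    have := blin_est (fun k => hdev l hl y k) k
    rw [wave_lead hij] at this
    calc _ ≤ _ := this
      _ = _ := by rw [hC]; ring
  have htr : ∀ l, 1 ≤ l → ∀ y, |W l 2 y + W l 4 y| ≤ C / l := by
    intro l hl y
    have h2 := abs_le.1 (hdev l hl y 2)
    have h4 := abs_le.1 (hdev l hl y 4)
    have h0 := wave_trace (i := i) (j := j) (a y * Real.cos (l * phase ξ y))
    have hp : 0 ≤ C₁ / l := by positivity
    have hCl : C / l = 10 * (C₁ / l) := by rw [hC]; ring
    rw [abs_le]
    constructor <;> linarith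
  have hblc : ∀ l k, Continuous fun y => blin (fun k => W l k y) k := fun l k =>
    (blin_contDiff (hWs l) k).continuous
  have hsmall : ∀ δ : ℝ, 0 < δ → ∀ᶠ l : ℝ in atTop, C / l < δ := fun δ hδ => by
    have := (tendsto_const_nhds (x := C)).div_atTop (tendsto_id (α := ℝ) (x := atTop))
    exact this.eventually (gt_mem_nhds hδ)
  -- The amplitude is at most half of `b i` and of `b j`, and `b` is bounded below on the compact set
  -- `Bset`, so positivity of the coordinates survives an `O(1/l)` error.
  have hposev : ∀ᶠ l : ℝ in atTop, ∀ y k, 0 < b k y + blin (fun k => W l k y) k := by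
    have hk : ∀ k, ∃ δ, 0 < δ ∧ ∀ y ∈ Bset, δ ≤ b k y := by
      intro k
      obtain ⟨y₀, -, hy₀⟩ := Bset_compact.exists_isMinOn ⟨0, by simp [Bset]⟩
        (hbs k).continuous.continuousOn
      exact ⟨b k y₀, hbp k y₀, fun y hy => hy₀ hy⟩
    choose δ hδ hδ' using hk
    have : ∀ᶠ l : ℝ in atTop, ∀ k, C / l < δ k / 2 :=
      eventually_all.2 fun k => hsmall _ (half_pos (hδ k))
    filter_upwards [this, eventually_ge_atTop 1] with l hl hl1 y k
    by_cases hy : y ∈ Bset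
    · have e1 := abs_le.1 (hbl l hl1 y k)
      have e2 : |sgn i j k * (a y * Real.cos (l * phase ξ y))| ≤ b k y / 2 := by
        have hc := Real.abs_cos_le_one (l * phase ξ y)
        have hac : |a y * Real.cos (l * phase ξ y)| ≤ a y := by
          rw [abs_mul, abs_of_nonneg (ha0 y)]
          exact mul_le_of_le_one_right (ha0 y) hc
        by_cases hki : k = i
        · subst hki
          rw [abs_mul]
          calc _ ≤ 1 * a y := by gcongr; exact sgn_abs _ _ _
            _ ≤ _ := by rw [one_mul]; exact hai y
        · by_cases hkj : k = j
          · subst hkj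
            rw [abs_mul]
            calc _ ≤ 1 * a y := by gcongr; exact sgn_abs _ _ _
              _ ≤ _ := by rw [one_mul]; exact haj y
          · have := hbp k y
            simp [sgn, hki, hkj]; positivity
      have e3 := abs_le.1 e2
      have := hδ' k y hy
      have := hl k
      linarith
    · have : (fun k => W l k y) = fun _ => 0 := by funext k; exact hWB l k y hy
      rw [this]
      have h0 : blin (fun _ => 0) k = 0 := by fin_cases k <;> simp [blin]
      rw [h0, add_zero]; exact hbp k y
  have hinner : ∀ᶠ l : ℝ in atTop, ∀ r ∈ Finset.range (N + 1),
      |∫ y in Bset, ∑ k, blin (fun k => W l k y) k * G r k y| < ε := by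
    rw [Finset.eventually_all]
    intro r _
    have hM : ∀ k, ∃ M, 0 ≤ M ∧ ∀ y ∈ Bset, |G r k y| ≤ M := fun k => by
      obtain ⟨M, hM⟩ := Bset_compact.exists_bound_of_continuousOn (hG r k).continuousOn
      exact ⟨max M 0, le_max_right _ _, fun y hy => (hM y hy).trans (le_max_left _ _)⟩
    choose M hM0 hM using hM
    have := osc_limit hξ (f := fun y => ∑ k, sgn i j k * a y * G r k y)
      (F := fun l y => ∑ k, blin (fun k => W l k y) k * G r k y) (C := C * ∑ k, M k)
      (continuous_finsetSum _ fun k _ => (continuous_const.mul ha.continuous).mul (hG r k))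
      (fun l => continuous_finsetSum _ fun k _ => (hblc l k).mul (hG r k)) ?_
    · have h2 := this.abs
      rw [abs_zero] at h2
      exact h2.eventually (gt_mem_nhds hε)
    · intro l hl y hy
      have hl0 : 0 < l := by linarith
      rw [Finset.sum_mul, ← Finset.sum_sub_distrib]
      refine (Finset.abs_sum_le_sum_abs _ _).trans ?_
      rw [Finset.mul_sum, Finset.sum_div]
      refine Finset.sum_le_sum fun k _ => ?_
      have : blin (fun k => W l k y) k * G r k y - sgn i j k * a y * G r k y *
          Real.cos (l * phase ξ y) = (blin (fun k => W l k y) k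
            - sgn i j k * (a y * Real.cos (l * phase ξ y))) * G r k y := by ring
      rw [this, abs_mul]
      calc _ ≤ C / l * M k := by gcongr; exacts [hbl l hl y k, hM k y hy]
        _ = _ := by ring
  -- `∑ₖ sgn² (a cos)² = 2 a² cos² = a² + a² cos(2 l ξ·y)`, and the last term integrates to `o(1)`.
  have hgain : ∀ᶠ l : ℝ in atTop,
      |∫ y in Bset, ((∑ k, blin (fun k => W l k y) k ^ 2) - a y ^ 2)| < ε := by
    have h2ξ : (2 : ℝ) • ξ ≠ 0 := smul_ne_zero two_ne_zero hξ
    have := osc_limit h2ξ (f := fun y => a y ^ 2)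
      (F := fun l y => (∑ k, blin (fun k => W l k y) k ^ 2) - a y ^ 2) (C := 5 * (2 * C + C ^ 2))
      (ha.continuous.pow 2)
      (fun l => (continuous_finsetSum _ fun k _ => (hblc l k).pow 2).sub (ha.continuous.pow 2)) ?_
    · have h2 := this.abs
      rw [abs_zero] at h2
      exact h2.eventually (gt_mem_nhds hε)
    · intro l hl y hy
      have hl0 : 0 < l := by linarith
      have hph : l * phase ((2 : ℝ) • ξ) y = 2 * (l * phase ξ y) := by
        simp [phase]; ring
      set c := Real.cos (l * phase ξ y) with hc
      have hs : ∑ k, (sgn i j k * (a y * c)) ^ 2 = 2 * (a y * c) ^ 2 := by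
        rw [← sgn_sq hij, Finset.sum_mul]
        exact Finset.sum_congr rfl fun k _ => by ring
      have e : (∑ k, blin (fun k => W l k y) k ^ 2) - a y ^ 2
          - a y ^ 2 * Real.cos (l * phase ((2 : ℝ) • ξ) y)
          = ∑ k, (blin (fun k => W l k y) k ^ 2 - (sgn i j k * (a y * c)) ^ 2) := by
        rw [Finset.sum_sub_distrib, hs, hph, Real.cos_two_mul]; ring
      rw [e]
      refine (Finset.abs_sum_le_sum_abs _ _).trans ?_
      have hterm : ∀ k, |blin (fun k => W l k y) k ^ 2 - (sgn i j k * (a y * c)) ^ 2|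
          ≤ (2 * C + C ^ 2) / l := by
        intro k
        set β := blin (fun k => W l k y) k
        set σ := sgn i j k * (a y * c)
        have h1 : |β - σ| ≤ C / l := hbl l hl y k
        have hσ : |σ| ≤ 1 := by
          simp only [σ, abs_mul]
          have h1 := sgn_abs i j k
          have h2 : |a y| ≤ 1 := by rw [abs_of_nonneg (ha0 y)]; exact ha1 y
          have h3 : |c| ≤ 1 := Real.abs_cos_le_one _
          exact mul_le_one₀ h1 (by positivity) (mul_le_one₀ h2 (by positivity) h3)
        have h2 : β ^ 2 - σ ^ 2 = (β - σ) * ((β - σ) + 2 * σ) := by ring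
        have hCl : C / l ≤ C := div_le_self hC0 hl
        have h4 : |(β - σ) + 2 * σ| ≤ C + 2 := by
          refine (abs_add_le _ _).trans ?_
          rw [abs_mul, abs_two]; linarith
        rw [h2, abs_mul]
        calc _ ≤ C / l * (C + 2) := by gcongr
          _ = _ := by ring
      calc _ ≤ ∑ _k : Fin 5, (2 * C + C ^ 2) / l := Finset.sum_le_sum fun k _ => hterm k
        _ = _ := by simp; ring
  obtain ⟨l, hl1, hlp, hli, hlg, hls⟩ := ((eventually_ge_atTop (1 : ℝ)).and (hposev.and
    (hinner.and (hgain.and (hsmall ε hε))))).exists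
  have hbary : ∀ y k, bary (fun m => Z m y + W l m y) k = b k y + blin (fun k => W l k y) k :=
    fun y k => bary_add _ _ k
  obtain hpde := fun y => wave_pde c₁ c₂ (osc_contDiff ξ ha l) y
  have hadd : ∀ m k y, pd m (fun y => Z k y + W l k y) y = pd m (Z k) y + pd m (W l k) y :=
    fun m k y => pd_add m (hZ.smooth k) (hWs l k) y
  refine ⟨fun k y => Z k y + W l k y, ⟨fun k => (hZ.smooth k).add (hWs l k), ?_, ?_, ?_, ?_, ?_⟩,
    ?_, ?_, ?_⟩
  · intro k y hy
    simp [hZ.supp k y hy, hWB l k y hy]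
  · intro y k; rw [hbary]; exact hlp y k
  · intro y; rw [hadd, hadd]; linarith [hZ.div y, (hpde y).1]
  · intro y; rw [hadd, hadd, hadd]; linarith [hZ.mom0 y, (hpde y).2.1]
  · intro y; rw [hadd, hadd, hadd]; linarith [hZ.mom1 y, (hpde y).2.2]
  · intro y
    have : Z 2 y + W l 2 y + (Z 4 y + W l 4 y) - (Z 2 y + Z 4 y) = W l 2 y + W l 4 y := by ring
    simp only [this]
    exact (htr l hl1 y).trans hls.le
  · intro r hr
    simp only [hbary, hb, add_sub_cancel_left]
    exact (hli r (Finset.mem_range.2 (Nat.lt_succ_of_le hr))).le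
  · simp only [hbary, hb, add_sub_cancel_left]
    change (∫ y in Bset, a y ^ 2) ≤ _
    have h1 := abs_lt.1 hlg
    rw [integral_sub] at h1
    · linarith
    · exact (continuous_finsetSum _ fun k _ => (hblc l k).pow 2).continuousOn.integrableOn_compact
        Bset_compact
    · exact (ha.continuous.pow 2).continuousOn.integrableOn_compact Bset_compact

/-! ### The iteration and its limit -/

/-- The `k`-th barycentric coordinate of the state field `Z`. -/
def co (Z : Fin 5 → Spt → ℝ) (k : Fin 5) (y : Spt) : ℝ := bary (fun l => Z l y) k

/-- `step_pair` applied to the pair of vertices with the largest amplitude, so that the increment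
controls all pairs simultaneously. -/
lemma step_all {χ : Spt → ℝ} (hχ : ContDiff ℝ (⊤ : ℕ∞) χ) (hχ0 : ∀ y, 0 ≤ χ y)
    (hχ1 : ∀ y, χ y ≤ 1) (hχB : ∀ y, y ∉ Bset → χ y = 0)
    {Z : Fin 5 → Spt → ℝ} (hZ : Good Z)
    (N : ℕ) (G : ℕ → Fin 5 → Spt → ℝ) (hG : ∀ r k, Continuous (G r k)) {ε : ℝ} (hε : 0 < ε) :
    ∃ Z', Good Z' ∧ (∀ y, |(Z' 2 y + Z' 4 y) - (Z 2 y + Z 4 y)| ≤ ε) ∧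
      (∀ r ≤ N, |∫ y in Bset, ∑ k, (co Z' k y - co Z k y) * G r k y| ≤ ε) ∧
      ∀ i j, i ≠ j → ∫ y in Bset, (χ y * co Z i y * co Z j y / 2) ^ 2 ≤
        (∫ y in Bset, ∑ k, (co Z' k y - co Z k y) ^ 2) + ε := by
  have : Nonempty {p : Fin 5 × Fin 5 // p.1 ≠ p.2} := ⟨⟨(0, 1), by decide⟩⟩
  obtain ⟨p, hp⟩ := Finite.exists_max fun p : {p : Fin 5 × Fin 5 // p.1 ≠ p.2} =>
    ∫ y in Bset, (χ y * co Z p.1.1 y * co Z p.1.2 y / 2) ^ 2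
  obtain ⟨Z', h1, h2, h3, h4⟩ := step_pair hχ hχ0 hχ1 hχB hZ p.2 N G hG hε
  exact ⟨Z', h1, h2, h3, fun i j hij => (hp ⟨(i, j), hij⟩).trans h4⟩

/-- Dependent choice where each new term depends on all the previous ones. -/
lemma exists_seq_history {α : Type*} (a₀ : α) (R : ℕ → (ℕ → α) → α → Prop)
    (h : ∀ n F, ∃ y, R n F y)
    (hc : ∀ n F F' y, (∀ r ≤ n, F r = F' r) → R n F y → R n F' y) :
    ∃ f : ℕ → α, f 0 = a₀ ∧ ∀ n, R n f (f (n + 1)) := by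
  choose next hnext using h
  let S : ℕ → ℕ → α := fun n => Nat.rec (fun _ => a₀)
    (fun n F => Function.update F (n + 1) (next n F)) n
  have hS : ∀ n, S (n + 1) = Function.update (S n) (n + 1) (next n (S n)) := fun n => rfl
  have hst : ∀ n r, r ≤ n → S n r = S r r := by
    intro n
    induction n with
    | zero => intro r hr; obtain rfl : r = 0 := by omega
              rfl
    | succ n ih =>
      intro r hr
      rcases Nat.lt_or_ge n r with h | h
      · obtain rfl : r = n + 1 := by omega
        rfl
      · rw [hS, Function.update_of_ne (by omega), ih r h]
  refine ⟨fun n => S n n, rfl, fun n => ?_⟩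
  apply hc n (S n) _ _ (fun r hr => hst n r hr)
  have : S (n + 1) (n + 1) = next n (S n) := by rw [hS, Function.update_self]
  simp only [this]
  exact hnext n (S n)

/-- A bounded sequence in an inner product space whose increments are summably close to being
orthogonal to all earlier terms is Cauchy: `‖x n‖²` is monotone up to a vanishing correction, hence
convergent, and `‖x n - x m‖²` is almost `‖x n‖² - ‖x m‖²`. -/
lemma cauchy_of_almost_orthogonal {H : Type*} [NormedAddCommGroup H] [InnerProductSpace ℝ H]
    {x : ℕ → H} {R : ℝ} (hR : ∀ n, ‖x n‖ ^ 2 ≤ R)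
    (h : ∀ n, ∀ m ≤ n, |inner ℝ (x (n + 1) - x n) (x m)| ≤ (1 / 2 : ℝ) ^ n) : CauchySeq x := by
  have hin : ∀ m n, m ≤ n → |inner ℝ (x n - x m) (x m)| ≤ 2 * (1 / 2 : ℝ) ^ m - 2 * (1 / 2) ^ n := by
    intro m n hmn
    induction n, hmn using Nat.le_induction with
    | base => simp
    | succ n hmn ih =>
      have e : x (n + 1) - x m = (x (n + 1) - x n) + (x n - x m) := by abel
      rw [e, inner_add_left]
      have := abs_add_le (inner ℝ (x (n + 1) - x n) (x m)) (inner ℝ (x n - x m) (x m))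
      have := h n m hmn
      rw [pow_succ]; linarith
  have hexp : ∀ m n, ‖x n - x m‖ ^ 2 = ‖x n‖ ^ 2 - ‖x m‖ ^ 2 - 2 * inner ℝ (x n - x m) (x m) := by
    intro m n
    have : x n = (x n - x m) + x m := by abel
    have h2 := norm_add_sq_real (x n - x m) (x m)
    rw [← this] at h2
    linarith
  have hmono : Monotone fun n => ‖x n‖ ^ 2 - 4 * (1 / 2 : ℝ) ^ n := by
    apply monotone_nat_of_le_succ
    intro n
    have h1 := hexp n (n + 1)
    have h2 := abs_le.1 (h n n le_rfl)
    have h3 := sq_nonneg ‖x (n + 1) - x n‖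
    have h4 : (1 / 2 : ℝ) ^ (n + 1) = (1 / 2) ^ n * (1 / 2) := pow_succ _ _
    have h5 : (0 : ℝ) < (1 / 2) ^ n := by positivity
    linarith
  have hbdd : BddAbove (Set.range fun n => ‖x n‖ ^ 2 - 4 * (1 / 2 : ℝ) ^ n) := by
    refine ⟨R, ?_⟩
    rintro _ ⟨n, rfl⟩
    have : (0 : ℝ) < (1 / 2) ^ n := by positivity
    have := hR n
    simp only; linarith
  have hcau := (tendsto_atTop_ciSup hmono hbdd).cauchySeq
  rw [Metric.cauchySeq_iff'] at hcau ⊢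
  intro ε hε
  obtain ⟨M, hM⟩ := exists_pow_lt_of_lt_one (show 0 < ε ^ 2 / 16 / 2 by positivity)
    (show (1 / 2 : ℝ) < 1 by norm_num)
  obtain ⟨N', hN'⟩ := hcau (ε ^ 2 / 8) (by positivity)
  refine ⟨max N' M, fun n hn => ?_⟩
  set m := max N' M
  have hm : (1 / 2 : ℝ) ^ m ≤ (1 / 2) ^ M :=
    pow_le_pow_of_le_one (by norm_num) (by norm_num) (le_max_right _ _)
  have hn0 : (0 : ℝ) < (1 / 2) ^ n := by positivity
  have hnm : (1 / 2 : ℝ) ^ n ≤ (1 / 2) ^ m :=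
    pow_le_pow_of_le_one (by norm_num) (by norm_num) hn
  have a1 := hN' n ((le_max_left N' M).trans hn)
  have a2 := hN' m (le_max_left N' M)
  rw [Real.dist_eq] at a1 a2
  have a1 := abs_lt.1 a1
  have a2 := abs_lt.1 a2
  have a3 := abs_le.1 (hin m n hn)
  have key : ‖x n - x m‖ ^ 2 < ε ^ 2 := by
    rw [hexp]; linarith
  rw [dist_eq_norm]
  exact lt_of_pow_lt_pow_left₀ 2 hε.le key

lemma inner_toLp {f g : Spt → EuclideanSpace ℝ (Fin 5)} {μ : Measure Spt}
    (hf : MemLp f 2 μ) (hg : MemLp g 2 μ) :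
    inner ℝ (hf.toLp f) (hg.toLp g) = ∫ y, ∑ k, f y k * g y k ∂μ := by
  rw [MeasureTheory.L2.inner_def]
  apply integral_congr_ae
  filter_upwards [hf.coeFn_toLp, hg.coeFn_toLp] with y h1 h2
  rw [h1, h2, PiLp.inner_apply]
  exact Finset.sum_congr rfl fun k _ => by simp [mul_comm]

lemma co_contDiff {Z : Fin 5 → Spt → ℝ} (h : Good Z) (k : Fin 5) :
    ContDiff ℝ (⊤ : ℕ∞) (co Z k) := bary_contDiff h.smooth k

/-- Iterating `step_all` from the zero state with tolerance `2⁻ⁿ`, the fields `G` being the coordinates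
of all earlier iterates. -/
lemma exists_seq {χ : Spt → ℝ} (hχ : ContDiff ℝ (⊤ : ℕ∞) χ) (hχ0 : ∀ y, 0 ≤ χ y)
    (hχ1 : ∀ y, χ y ≤ 1) (hχB : ∀ y, y ∉ Bset → χ y = 0) :
    ∃ Z : ℕ → Fin 5 → Spt → ℝ, (∀ n, Good (Z n)) ∧ Z 0 = (fun _ _ => 0) ∧
      (∀ n y, |(Z (n + 1) 2 y + Z (n + 1) 4 y) - (Z n 2 y + Z n 4 y)| ≤ (1 / 2 : ℝ) ^ n) ∧
      (∀ n, ∀ m ≤ n, |∫ y in Bset, ∑ k, (co (Z (n + 1)) k y - co (Z n) k y) * co (Z m) k y|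
        ≤ (1 / 2 : ℝ) ^ n) ∧
      (∀ n i j, i ≠ j → ∫ y in Bset, (χ y * co (Z n) i y * co (Z n) j y / 2) ^ 2 ≤
        (∫ y in Bset, ∑ k, (co (Z (n + 1)) k y - co (Z n) k y) ^ 2) + (1 / 2 : ℝ) ^ n) := by
  obtain ⟨f, hf0, hf⟩ := exists_seq_history (α := {Z : Fin 5 → Spt → ℝ // Good Z})
    ⟨_, good_zero⟩ (fun n F Z' =>
      (∀ y, |(Z'.1 2 y + Z'.1 4 y) - ((F n).1 2 y + (F n).1 4 y)| ≤ (1 / 2 : ℝ) ^ n) ∧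
      (∀ m ≤ n, |∫ y in Bset, ∑ k, (co Z'.1 k y - co (F n).1 k y) * co (F m).1 k y|
        ≤ (1 / 2 : ℝ) ^ n) ∧
      (∀ i j, i ≠ j → ∫ y in Bset, (χ y * co (F n).1 i y * co (F n).1 j y / 2) ^ 2 ≤
        (∫ y in Bset, ∑ k, (co Z'.1 k y - co (F n).1 k y) ^ 2) + (1 / 2 : ℝ) ^ n))
    (fun n F => by
      obtain ⟨Z', h1, h2, h3, h4⟩ := step_all hχ hχ0 hχ1 hχB (F n).2 n (fun r => co (F r).1)
        (fun r k => (co_contDiff (F r).2 k).continuous)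
        (show (0 : ℝ) < (1 / 2 : ℝ) ^ n by positivity)
      exact ⟨⟨Z', h1⟩, h2, h3, h4⟩)
    (fun n F F' Z' hFF h => by
      rw [hFF n le_rfl] at h
      refine ⟨h.1, fun m hm => ?_, h.2.2⟩
      rw [← hFF m hm]
      exact h.2.1 m hm)
  refine ⟨fun n => (f n).1, fun n => (f n).2, by simp [hf0], fun n => (hf n).1,
    fun n => (hf n).2.1, fun n => (hf n).2.2⟩

/-- The barycentric coordinates converge in `L²(Bset)`, hence almost everywhere along a subsequence. The
increments tend to zero in `L²`, so the amplitudes `χ bᵢ bⱼ / 2` vanish in the limit. -/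
lemma exists_limit {χ : Spt → ℝ} {Z : ℕ → Fin 5 → Spt → ℝ} (hχ : Continuous χ) (hχ0 : ∀ y, 0 ≤ χ y)
    (hχ1 : ∀ y, χ y ≤ 1)
    (hZ : ∀ n, Good (Z n))
    (hin : ∀ n, ∀ m ≤ n, |∫ y in Bset, ∑ k, (co (Z (n + 1)) k y - co (Z n) k y) * co (Z m) k y|
        ≤ (1 / 2 : ℝ) ^ n)
    (hg : ∀ n i j, i ≠ j → ∫ y in Bset, (χ y * co (Z n) i y * co (Z n) j y / 2) ^ 2 ≤
        (∫ y in Bset, ∑ k, (co (Z (n + 1)) k y - co (Z n) k y) ^ 2) + (1 / 2 : ℝ) ^ n) :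
    ∃ (ns : ℕ → ℕ) (b : Fin 5 → Spt → ℝ), StrictMono ns ∧
      (∀ᵐ y ∂(volume.restrict Bset), ∀ k, Tendsto (fun n => co (Z (ns n)) k y) atTop (𝓝 (b k y))) ∧
      (∀ᵐ y ∂(volume.restrict Bset), ∀ i j, i ≠ j → χ y * b i y * b j y = 0) := by
  have : IsFiniteMeasure (volume.restrict Bset) :=
    ⟨by rw [Measure.restrict_apply_univ]; exact Bset_compact.measure_lt_top⟩
  let X : ℕ → Spt → EuclideanSpace ℝ (Fin 5) := fun n y => WithLp.toLp 2 fun k => co (Z n) k y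
  have hXc : ∀ n, Continuous (X n) := fun n =>
    (PiLp.continuous_toLp 2 _).comp (continuous_pi fun k => (co_contDiff (hZ n) k).continuous)
  have hX1 : ∀ n y, ‖X n y‖ ^ 2 ≤ 1 := by
    intro n y
    rw [EuclideanSpace.norm_sq_eq]
    have hs := bary_sum fun l => Z n l y
    calc _ ≤ ∑ k, co (Z n) k y := by
          refine Finset.sum_le_sum fun k _ => ?_
          have h1 : 0 < co (Z n) k y := (hZ n).pos y k
          have h2 : co (Z n) k y ≤ 1 := (hZ n).le_one y k
          simp only [X, Real.norm_eq_abs, sq_abs]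
          nlinarith
      _ = 1 := hs
  have hXm : ∀ n, MemLp (X n) 2 (volume.restrict Bset) := fun n =>
    MemLp.of_bound (hXc n).aestronglyMeasurable 1 (Eventually.of_forall fun y => by
      have := hX1 n y
      nlinarith [norm_nonneg (X n y)])
  let x : ℕ → Lp (EuclideanSpace ℝ (Fin 5)) 2 (volume.restrict Bset) := fun n => (hXm n).toLp (X n)
  have hsub : ∀ m n, x m - x n = ((hXm m).sub (hXm n)).toLp (X m - X n) := fun m n =>
    (MemLp.toLp_sub (hXm m) (hXm n)).symm
  have hcau : CauchySeq x := by
    refine cauchy_of_almost_orthogonal (R := ∫ y in Bset, (1 : ℝ)) (fun n => ?_) (fun n m hm => ?_)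
    · rw [← real_inner_self_eq_norm_sq, inner_toLp]
      apply integral_mono
      · have hc : Continuous fun y => ∑ k, X n y k * X n y k :=
          continuous_finsetSum _ fun k _ => by
            have := (co_contDiff (hZ n) k).continuous
            exact this.mul this
        exact hc.continuousOn.integrableOn_compact Bset_compact
      · exact integrable_const _
      · intro y
        have := hX1 n y
        rw [EuclideanSpace.norm_sq_eq] at this
        simp only [Real.norm_eq_abs, sq_abs] at this
        calc _ = ∑ k, X n y k ^ 2 := Finset.sum_congr rfl fun k _ => by ring
          _ ≤ _ := this
    · rw [hsub, inner_toLp]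
      exact hin n m hm
  obtain ⟨x', hx'⟩ := cauchySeq_tendsto_of_complete hcau
  have hinc : Tendsto (fun n => ∫ y in Bset, ∑ k, (co (Z (n + 1)) k y - co (Z n) k y) ^ 2) atTop
      (𝓝 0) := by
    have h1 : Tendsto (fun n => x (n + 1) - x n) atTop (𝓝 0) := by
      simpa using (hx'.comp (tendsto_add_atTop_nat 1)).sub hx'
    have h2 := (h1.norm).pow 2
    rw [norm_zero, zero_pow two_ne_zero] at h2
    refine h2.congr fun n => ?_
    rw [← real_inner_self_eq_norm_sq, hsub, inner_toLp]
    congr 1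
    funext y
    exact Finset.sum_congr rfl fun k _ => by simp [X]; ring
  have hgain : ∀ i j, i ≠ j → Tendsto (fun n => ∫ y in Bset,
      (χ y * co (Z n) i y * co (Z n) j y / 2) ^ 2) atTop (𝓝 0) := by
    intro i j hij
    have h2 := hinc.add (tendsto_pow_atTop_nhds_zero_of_lt_one
      (show (0 : ℝ) ≤ 1 / 2 by norm_num) (show (1 / 2 : ℝ) < 1 by norm_num))
    rw [add_zero] at h2
    refine squeeze_zero (fun n => ?_) (fun n => hg n i j hij) h2
    exact integral_nonneg fun y => sq_nonneg _
  obtain ⟨ns, hns, hae⟩ := (tendstoInMeasure_of_tendsto_Lp hx').exists_seq_tendsto_ae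
  have hae2 : ∀ᵐ y ∂(volume.restrict Bset), ∀ n, x n y = X n y :=
    ae_all_iff.2 fun n => (hXm n).coeFn_toLp
  have hconv : ∀ᵐ y ∂(volume.restrict Bset), ∀ k,
      Tendsto (fun n => co (Z (ns n)) k y) atTop (𝓝 (x' y k)) := by
    filter_upwards [hae, hae2] with y h1 h2 k
    have h3 := ((PiLp.continuous_apply 2 (fun _ : Fin 5 => ℝ) k).tendsto (x' y)).comp h1
    refine h3.congr fun n => ?_
    simp only [Function.comp_apply, h2]
    rfl
  refine ⟨ns, fun k y => x' y k, hns, hconv, ?_⟩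
  rw [ae_all_iff]; intro i
  rw [ae_all_iff]; intro j
  by_cases hij : i = j
  · exact Eventually.of_forall fun y h => absurd hij h
  have hdom : Tendsto (fun n => ∫ y in Bset,
      (χ y * co (Z (ns n)) i y * co (Z (ns n)) j y / 2) ^ 2) atTop
      (𝓝 (∫ y in Bset, (χ y * x' y i * x' y j / 2) ^ 2)) := by
    refine tendsto_integral_of_dominated_convergence (fun _ => (1 : ℝ)) (fun n => ?_)
      (integrable_const _) (fun n => Eventually.of_forall fun y => ?_) ?_
    · have h1 := (co_contDiff (hZ (ns n)) i).continuous
      have h2 := (co_contDiff (hZ (ns n)) j).continuous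
      exact (by fun_prop : Continuous fun y =>
        (χ y * co (Z (ns n)) i y * co (Z (ns n)) j y / 2) ^ 2).aestronglyMeasurable
    · have p1 : 0 < co (Z (ns n)) i y := (hZ (ns n)).pos y i
      have p2 : 0 < co (Z (ns n)) j y := (hZ (ns n)).pos y j
      have q1 : co (Z (ns n)) i y ≤ 1 := (hZ (ns n)).le_one y i
      have q2 : co (Z (ns n)) j y ≤ 1 := (hZ (ns n)).le_one y j
      have c0 := hχ0 y
      have h1 : χ y * co (Z (ns n)) i y * co (Z (ns n)) j y ≤ 1 :=
        mul_le_one₀ (mul_le_one₀ (hχ1 y) p1.le q1) p2.le q2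
      have h0 : 0 ≤ χ y * co (Z (ns n)) i y * co (Z (ns n)) j y := by positivity
      rw [Real.norm_eq_abs, abs_of_nonneg (sq_nonneg _)]
      nlinarith
    · filter_upwards [hconv] with y hy
      exact ((((hy i).const_mul (χ y)).mul (hy j)).div_const 2).pow 2
  have h0 : ∫ y in Bset, (χ y * x' y i * x' y j / 2) ^ 2 = 0 :=
    tendsto_nhds_unique hdom ((hgain i j hij).comp hns.tendsto_atTop)
  have hb : ∀ᵐ y ∂(volume.restrict Bset), ∀ k, |x' y k| ≤ 1 := by
    filter_upwards [hconv] with y hy k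
    refine le_of_tendsto (hy k).abs (Eventually.of_forall fun n => ?_)
    have p : 0 < co (Z (ns n)) k y := (hZ (ns n)).pos y k
    rw [abs_of_pos p]
    exact (hZ (ns n)).le_one y k
  rw [integral_eq_zero_iff_of_nonneg (fun y => sq_nonneg _)] at h0
  · filter_upwards [h0] with y hy _
    have : χ y * x' y i * x' y j / 2 = 0 := by simpa using hy
    linarith
  · have hm : ∀ k : Fin 5, AEStronglyMeasurable (fun y => x' y k) (volume.restrict Bset) := fun k =>
      (PiLp.continuous_apply 2 (fun _ : Fin 5 => ℝ) k).comp_aestronglyMeasurable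
        (Lp.aestronglyMeasurable x')
    refine Integrable.mono' (integrable_const (1 : ℝ)) ?_ ?_
    · simp_rw [div_eq_mul_inv]
      exact (((hχ.aestronglyMeasurable.mul (hm i)).mul (hm j)).mul_const _).pow 2
    · filter_upwards [hb] with y hy
      rw [Real.norm_eq_abs, abs_of_nonneg (sq_nonneg _), sq_le_one_iff_abs_le_one, abs_div, abs_mul,
        abs_mul, abs_two, abs_of_nonneg (hχ0 y)]
      have : χ y * |x' y i| * |x' y j| ≤ 1 :=
        mul_le_one₀ (mul_le_one₀ (hχ1 y) (abs_nonneg _) (hy i)) (abs_nonneg _) (hy j)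
      linarith

/-! ### The limiting planar Euler flow -/

lemma convex_bound {b c : Fin 5 → ℝ} (hb : ∀ k, 0 ≤ b k) (hs : ∑ k, b k = 1)
    (hc : ∀ k, |c k| ≤ 1) : |∑ k, b k * c k| ≤ 1 := by
  calc _ ≤ ∑ k, |b k * c k| := Finset.abs_sum_le_sum_abs _ _
    _ ≤ ∑ k, b k := by
      refine Finset.sum_le_sum fun k _ => ?_
      rw [abs_mul, abs_of_nonneg (hb k)]
      exact mul_le_of_le_one_right (hb k) (hc k)
    _ = 1 := hs

lemma Good.bounds {Z : Fin 5 → Spt → ℝ} (h : Good Z) (y : Spt) :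
    |Z 0 y| ≤ 1 ∧ |Z 1 y| ≤ 1 ∧ |Z 2 y - Z 4 y| ≤ 1 ∧ |Z 3 y| ≤ 1 := by
  have hb : ∀ k, 0 ≤ bary (fun l => Z l y) k := fun k => (h.pos y k).le
  have hs := bary_sum fun l => Z l y
  have e0 := bary_vx fun l => Z l y
  have e1 := bary_vy fun l => Z l y
  have e2 := bary_diff fun l => Z l y
  have e3 := bary_off fun l => Z l y
  rw [e0, e1, e2, e3]
  refine ⟨convex_bound hb hs fun k => ?_, convex_bound hb hs fun k => ?_,
    convex_bound hb hs fun k => ?_, convex_bound hb hs fun k => ?_⟩ <;>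
  · have := vertex_unit k
    rw [abs_le]
    constructor <;> nlinarith [sq_nonneg (vx k), sq_nonneg (vy k), sq_nonneg (vx k + vy k),
      sq_nonneg (vx k - vy k)]

lemma exists_one_of_mul_eq_zero {b : Fin 5 → ℝ} (hs : ∑ k, b k = 1)
    (h : ∀ i j, i ≠ j → b i * b j = 0) : ∃ k, b k = 1 ∧ ∀ j, j ≠ k → b j = 0 := by
  obtain ⟨k, hk⟩ : ∃ k, b k ≠ 0 := by
    by_contra! hc
    simp [hc] at hs
  have h0 : ∀ j, j ≠ k → b j = 0 := fun j hj => (mul_eq_zero.1 (h j k hj)).resolve_right hk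
  refine ⟨k, ?_, h0⟩
  rw [← hs, Finset.sum_eq_single k (fun j _ hj => h0 j hj) (by simp)]

/-- Subsolutions `Z n` converging boundedly almost everywhere to a field `W` which satisfies the
nonlinear constraint `S = v ⊗ v + p I` with `p = W 2 - (W 0)²`, and has `|v| = 1` on `Bset`. Where
`χ ≠ 0` the limiting coordinates have vanishing pairwise products, so the limit is a vertex; the trace
of `S` converges uniformly. -/
lemma exists_euler : ∃ (Z : ℕ → Fin 5 → Spt → ℝ) (W : Fin 5 → Spt → ℝ), (∀ n, Good (Z n)) ∧
    (∀ n l y, |Z n l y| ≤ 2) ∧ (∀ l, Measurable (W l)) ∧ (∀ l y, |W l y| ≤ 2) ∧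
    (∀ l y, y ∉ Bset → W l y = 0) ∧
    (∀ᵐ y, ∀ l, Tendsto (fun n => Z n l y) atTop (𝓝 (W l y))) ∧
    (∀ᵐ y, y ∈ Bset → W 0 y ^ 2 + W 1 y ^ 2 = 1) ∧
    (∀ᵐ y, W 4 y = W 1 y ^ 2 + (W 2 y - W 0 y ^ 2) ∧ W 3 y = W 0 y * W 1 y) := by
  obtain ⟨χ, hχ, hχ0, hχ1, hχB, hχne⟩ := exists_cutoff
  obtain ⟨Z, hZ, hZ0, htr, hin, hg⟩ := exists_seq hχ hχ0 hχ1 hχB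
  obtain ⟨ns, b, hns, hconv, hprod⟩ := exists_limit hχ.continuous hχ0 hχ1 hZ hin hg
  have htrb : ∀ n y, |Z n 2 y + Z n 4 y| ≤ 2 - 2 * (1 / 2 : ℝ) ^ n := by
    intro n y
    induction n with
    | zero => simp [hZ0]
    | succ n ih =>
      have h1 := htr n y
      have h2 := abs_add_le ((Z (n + 1) 2 y + Z (n + 1) 4 y) - (Z n 2 y + Z n 4 y))
        (Z n 2 y + Z n 4 y)
      rw [sub_add_cancel] at h2
      rw [pow_succ]
      linarith
  have htrc : ∀ y, ∃ T, Tendsto (fun n => Z n 2 y + Z n 4 y) atTop (𝓝 T) := fun y =>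
    cauchySeq_tendsto_of_complete
      (cauchySeq_of_le_geometric (1 / 2) 1 (by norm_num) fun n => by
        rw [dist_comm, Real.dist_eq, one_mul]; exact htr n y)
  have hbd : ∀ n l y, |Z n l y| ≤ 2 := by
    intro n l y
    obtain ⟨h0, h1, h2, h3⟩ := (hZ n).bounds y
    have h4 := htrb n y
    have h5 : (0 : ℝ) < (1 / 2) ^ n := by positivity
    rw [abs_le] at *
    fin_cases l <;> simp only [Fin.mk_zero, Fin.mk_one, Fin.reduceFinMk,
      Fin.isValue] <;> constructor <;> linarith
  rw [ae_restrict_iff' Bset_compact.measurableSet] at hconv hprod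
  have hpt : ∀ᵐ y, ∃ z : Fin 5 → ℝ, Tendsto (fun n l => Z (ns n) l y) atTop (𝓝 z) := by
    filter_upwards [hconv] with y hy
    by_cases hB : y ∈ Bset
    · have hy := hy hB
      have e0 : Tendsto (fun n => Z (ns n) 0 y) atTop (𝓝 (∑ k, b k y * vx k)) := by
        refine (tendsto_finsetSum _ fun k _ => (hy k).mul_const (vx k)).congr fun n => ?_
        exact (bary_vx fun l => Z (ns n) l y).symm
      have e1 : Tendsto (fun n => Z (ns n) 1 y) atTop (𝓝 (∑ k, b k y * vy k)) := by
        refine (tendsto_finsetSum _ fun k _ => (hy k).mul_const (vy k)).congr fun n => ?_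
        exact (bary_vy fun l => Z (ns n) l y).symm
      have e2 : Tendsto (fun n => Z (ns n) 2 y - Z (ns n) 4 y) atTop
          (𝓝 (∑ k, b k y * (vx k ^ 2 - vy k ^ 2))) := by
        refine (tendsto_finsetSum _ fun k _ => (hy k).mul_const _).congr fun n => ?_
        exact (bary_diff fun l => Z (ns n) l y).symm
      have e3 : Tendsto (fun n => Z (ns n) 3 y) atTop (𝓝 (∑ k, b k y * (vx k * vy k))) := by
        refine (tendsto_finsetSum _ fun k _ => (hy k).mul_const _).congr fun n => ?_
        exact (bary_off fun l => Z (ns n) l y).symm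
      obtain ⟨T, hT⟩ := htrc y
      have hT := hT.comp hns.tendsto_atTop
      have e4 : Tendsto (fun n => Z (ns n) 2 y) atTop
          (𝓝 ((T + ∑ k, b k y * (vx k ^ 2 - vy k ^ 2)) / 2)) :=
        ((hT.add e2).div_const 2).congr fun n => by simp only [Function.comp_apply]; ring
      have e5 : Tendsto (fun n => Z (ns n) 4 y) atTop
          (𝓝 ((T - ∑ k, b k y * (vx k ^ 2 - vy k ^ 2)) / 2)) :=
        ((hT.sub e2).div_const 2).congr fun n => by simp only [Function.comp_apply]; ring
      have e : ∀ l, ∃ z, Tendsto (fun n => Z (ns n) l y) atTop (𝓝 z) := by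
        intro l
        fin_cases l
        exacts [⟨_, e0⟩, ⟨_, e1⟩, ⟨_, e4⟩, ⟨_, e3⟩, ⟨_, e5⟩]
      choose z hz using e
      exact ⟨z, tendsto_pi_nhds.2 hz⟩
    · refine ⟨0, tendsto_pi_nhds.2 fun l => ?_⟩
      simp only [(hZ _).supp l y hB]
      exact tendsto_const_nhds
  obtain ⟨L, hLm, hL⟩ := measurable_limit_of_tendsto_metrizable_ae
    (fun n => (measurable_pi_lambda (fun y l => Z (ns n) l y) fun l =>
      ((hZ (ns n)).smooth l).continuous.measurable).aemeasurable) hpt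
  -- Restricting to `s` makes the bounds and the support condition hold at every point.
  let s : Set Spt := Bset ∩ {y | ∀ l, |L y l| ≤ 2}
  have hs : MeasurableSet s := by
    refine Bset_compact.measurableSet.inter ?_
    rw [Set.ofPred_forall]
    exact MeasurableSet.iInter fun l =>
      measurableSet_le ((measurable_pi_apply l).comp hLm).abs measurable_const
  have hlim : ∀ᵐ y, ∀ l, Tendsto (fun n => Z (ns n) l y) atTop
      (𝓝 (s.indicator (fun y => L y l) y)) := by
    filter_upwards [hL] with y hy l
    have hyl := tendsto_pi_nhds.1 hy
    by_cases hB : y ∈ Bset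
    · have : y ∈ s := ⟨hB, fun l => le_of_tendsto (hyl l).abs
        (Eventually.of_forall fun n => hbd _ _ _)⟩
      rw [Set.indicator_of_mem this]
      exact hyl l
    · rw [Set.indicator_of_notMem fun h => hB h.1]
      simp only [(hZ _).supp l y hB]
      exact tendsto_const_nhds
  have hball : ∀ᵐ y : Spt, y ∈ Bset → y ∈ Metric.ball (0 : Spt) 2 := by
    have : volume (Metric.sphere (0 : Spt) 2) = 0 := Measure.addHaar_sphere _ _ _
    filter_upwards [measure_eq_zero_iff_ae_notMem.1 this] with y hy hB
    exact lt_of_le_of_ne (Metric.mem_closedBall.1 hB) hy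
  have hvert : ∀ᵐ y, y ∈ Bset → ∃ k, s.indicator (fun y => L y 0) y = vx k ∧
      s.indicator (fun y => L y 1) y = vy k ∧
      s.indicator (fun y => L y 2) y - s.indicator (fun y => L y 4) y = vx k ^ 2 - vy k ^ 2 ∧
      s.indicator (fun y => L y 3) y = vx k * vy k := by
    filter_upwards [hconv, hprod, hlim, hball] with y h1 h2 h3 h4 hB
    have h1 := h1 hB
    have h2 := h2 hB
    have hsum : ∑ k, b k y = 1 := by
      refine tendsto_nhds_unique (tendsto_finsetSum _ fun k _ => h1 k) ?_
      refine tendsto_const_nhds.congr fun n => ?_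
      exact (bary_sum fun l => Z (ns n) l y).symm
    obtain ⟨k, hk, hk0⟩ := exists_one_of_mul_eq_zero hsum fun i j hij => by
      have := h2 i j hij
      rw [mul_assoc] at this
      exact (mul_eq_zero.1 this).resolve_left (hχne y (h4 hB))
    have hsk : ∀ c : Fin 5 → ℝ, ∑ j, b j y * c j = c k := fun c => by
      rw [Finset.sum_eq_single k (fun j _ hj => by rw [hk0 j hj, zero_mul]) (by simp), hk, one_mul]
    refine ⟨k, ?_, ?_, ?_, ?_⟩
    · rw [← hsk vx]
      refine tendsto_nhds_unique (h3 0) ?_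
      refine (tendsto_finsetSum _ fun k _ => (h1 k).mul_const (vx k)).congr fun n => ?_
      exact (bary_vx fun l => Z (ns n) l y).symm
    · rw [← hsk vy]
      refine tendsto_nhds_unique (h3 1) ?_
      refine (tendsto_finsetSum _ fun k _ => (h1 k).mul_const (vy k)).congr fun n => ?_
      exact (bary_vy fun l => Z (ns n) l y).symm
    · rw [← hsk fun k => vx k ^ 2 - vy k ^ 2]
      refine tendsto_nhds_unique ((h3 2).sub (h3 4)) ?_
      refine (tendsto_finsetSum _ fun k _ => (h1 k).mul_const _).congr fun n => ?_
      exact (bary_diff fun l => Z (ns n) l y).symm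
    · rw [← hsk fun k => vx k * vy k]
      refine tendsto_nhds_unique (h3 3) ?_
      refine (tendsto_finsetSum _ fun k _ => (h1 k).mul_const _).congr fun n => ?_
      exact (bary_off fun l => Z (ns n) l y).symm
  refine ⟨fun n => Z (ns n), fun l => s.indicator fun y => L y l, fun n => hZ _,
    fun n => hbd _, fun l => ((measurable_pi_apply l).comp hLm).indicator hs, fun l y => ?_,
    fun l y hy => Set.indicator_of_notMem (fun h => hy h.1) _, hlim, ?_, ?_⟩
  · simp only
    by_cases hy : y ∈ s
    · rw [Set.indicator_of_mem hy]; exact hy.2 l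
    · rw [Set.indicator_of_notMem hy]; norm_num
  · filter_upwards [hvert] with y h hB
    obtain ⟨k, e0, e1, -, -⟩ := h hB
    rw [e0, e1]
    exact vertex_unit k
  · filter_upwards [hvert] with y h
    by_cases hB : y ∈ Bset
    · obtain ⟨k, e0, e1, e2, e3⟩ := h hB
      rw [e0, e1, e3]
      exact ⟨by linarith, rfl⟩
    · have : y ∉ s := fun h => hB h.1
      simp [this]

/-! ### Pull-back to ℝ³ × ℝ and weak equations -/

/-- The projection `(x, t) ↦ (x₀, x₁, t)` forgetting `x₂`. -/
def proj : (Fin 3 → ℝ) × ℝ →L[ℝ] Spt :=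
  LinearMap.toContinuousLinearMap
    { toFun := fun y => ![y.1 0, y.1 1, y.2]
      map_add' := fun y z => by ext i; fin_cases i <;> simp
      map_smul' := fun c y => by ext i; fin_cases i <;> simp }

lemma proj_apply (y : (Fin 3 → ℝ) × ℝ) : proj y = ![y.1 0, y.1 1, y.2] := rfl

lemma proj_surj : Function.Surjective proj := fun z =>
  ⟨(![z 0, z 1, 0], z 2), by rw [proj_apply]; ext i; fin_cases i <;> simp⟩

lemma proj_single_zero : proj (Pi.single 0 1, 0) = Pi.single 0 1 := by
  rw [proj_apply]; ext i; fin_cases i <;> simp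

lemma proj_single_one : proj (Pi.single 1 1, 0) = Pi.single 1 1 := by
  rw [proj_apply]; ext i; fin_cases i <;> simp

lemma proj_single_two : proj (Pi.single 2 1, 0) = 0 := by
  rw [proj_apply]; ext i; fin_cases i <;> simp

lemma proj_time : proj (0, 1) = Pi.single 2 1 := by
  rw [proj_apply]; ext i; fin_cases i <;> simp

instance : (volume : Measure ((Fin 3 → ℝ) × ℝ)).IsAddHaarMeasure :=
  Measure.prod.instIsAddHaarMeasure _ _

/-- The projection pulls null sets back to null sets. -/
lemma ae_proj {P : Spt → Prop} (h : ∀ᵐ z, P z) : ∀ᵐ y : (Fin 3 → ℝ) × ℝ, P (proj y) := by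
  obtain ⟨c, -, hc⟩ := (proj : (Fin 3 → ℝ) × ℝ →ₗ[ℝ] Spt).exists_map_addHaar_eq_smul_addHaar
    (volume : Measure ((Fin 3 → ℝ) × ℝ)) (volume : Measure Spt) proj_surj
  have hq : Measure.QuasiMeasurePreserving proj (volume : Measure ((Fin 3 → ℝ) × ℝ))
      (volume : Measure Spt) :=
    ⟨proj.continuous.measurable, by
      rw [show (volume : Measure ((Fin 3 → ℝ) × ℝ)).map proj = c • volume from hc]
      exact Measure.smul_absolutelyContinuous⟩
  exact hq.ae h

/-- Integration by parts of a pulled-back function against a test function, in direction `v`. -/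
lemma ibp {f : Spt → ℝ} (hf : ContDiff ℝ (⊤ : ℕ∞) f) {φ : (Fin 3 → ℝ) × ℝ → ℝ}
    (hφ : ContDiff ℝ (⊤ : ℕ∞) φ) (hc : HasCompactSupport φ) (v : (Fin 3 → ℝ) × ℝ) :
    Integrable (fun y => f (proj y) * fderiv ℝ φ y v) ∧
    Integrable (fun y => fderiv ℝ f (proj y) (proj v) * φ y) ∧
    ∫ y, f (proj y) * fderiv ℝ φ y v = - ∫ y, fderiv ℝ f (proj y) (proj v) * φ y := by
  have hd : ∀ y, fderiv ℝ (fun y => f (proj y)) y v = fderiv ℝ f (proj y) (proj v) := fun y => by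
    have := ((contDiff_diff hf (proj y)).hasFDerivAt.comp y proj.hasFDerivAt).fderiv
    change fderiv ℝ (f ∘ proj) y v = _
    rw [this]; rfl
  have hfp : ContDiff ℝ (⊤ : ℕ∞) fun y => f (proj y) := hf.comp proj.contDiff
  have c1 : Continuous fun y => fderiv ℝ φ y v :=
    ((hφ.continuous_fderiv (by simp)).clm_apply continuous_const)
  have c2 : Continuous fun y => fderiv ℝ f (proj y) (proj v) :=
    (((hf.continuous_fderiv (by simp)).comp proj.continuous).clm_apply continuous_const)
  have i1 : Integrable (fun y => f (proj y) * fderiv ℝ φ y v) :=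
    (hfp.continuous.mul c1).integrable_of_hasCompactSupport
      ((hc.fderiv_apply ℝ v).mul_left)
  have i2 : Integrable (fun y => fderiv ℝ f (proj y) (proj v) * φ y) :=
    (c2.mul hφ.continuous).integrable_of_hasCompactSupport hc.mul_left
  have i3 : Integrable (fun y => f (proj y) * φ y) :=
    (hfp.continuous.mul hφ.continuous).integrable_of_hasCompactSupport hc.mul_left
  refine ⟨i1, i2, ?_⟩
  have := integral_mul_fderiv_eq_neg_fderiv_mul_of_integrable (μ := volume) (v := v)
    (f := fun y => f (proj y)) (g := φ) (by simpa only [hd] using i2) i1 i3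
    (fun x _ => hfp.differentiable (by simp) x) (fun x _ => hφ.differentiable (by simp) x)
  simpa only [hd] using this

/-- Space-time divergence-free fields `(F 0, F 1; F 2)` on the plane, completed by an arbitrary
component `F 3` in the `x₂`-direction, stay weakly divergence free on `ℝ³ × ℝ` after pull-back by `proj`
and bounded almost everywhere limits. The component `F 3` is unconstrained because pulled-back functions
do not depend on `x₂`. -/
lemma weak_limit {F : ℕ → Fin 4 → Spt → ℝ} {G : Fin 4 → Spt → ℝ} {C : ℝ}
    (hF : ∀ n i, ContDiff ℝ (⊤ : ℕ∞) (F n i)) (hFC : ∀ n i y, |F n i y| ≤ C)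
    (hdiv : ∀ n y, pd 0 (F n 0) y + pd 1 (F n 1) y + pd 2 (F n 2) y = 0)
    (hG : ∀ i, Measurable (G i)) (hGC : ∀ i y, |G i y| ≤ C)
    (hlim : ∀ᵐ y, ∀ i, Tendsto (fun n => F n i y) atTop (𝓝 (G i y)))
    {φ : (Fin 3 → ℝ) × ℝ → ℝ} (hφ : ContDiff ℝ (⊤ : ℕ∞) φ) (hc : HasCompactSupport φ) :
    Integrable (fun y => G 0 (proj y) * fderiv ℝ φ y (Pi.single 0 1, 0)
      + G 1 (proj y) * fderiv ℝ φ y (Pi.single 1 1, 0) + G 2 (proj y) * fderiv ℝ φ y (0, 1)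
      + G 3 (proj y) * fderiv ℝ φ y (Pi.single 2 1, 0)) ∧
    ∫ y, (G 0 (proj y) * fderiv ℝ φ y (Pi.single 0 1, 0)
      + G 1 (proj y) * fderiv ℝ φ y (Pi.single 1 1, 0) + G 2 (proj y) * fderiv ℝ φ y (0, 1)
      + G 3 (proj y) * fderiv ℝ φ y (Pi.single 2 1, 0)) = 0 := by
  have hcont : ∀ v, Continuous fun y => fderiv ℝ φ y v := fun v =>
    ((hφ.continuous_fderiv (by simp)).clm_apply continuous_const)
  have hint : ∀ v, Integrable fun y => C * |fderiv ℝ φ y v| := fun v =>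
    (((hcont v).integrable_of_hasCompactSupport (hc.fderiv_apply ℝ v)).abs).const_mul C
  have hbd : Integrable fun y : (Fin 3 → ℝ) × ℝ => C * |fderiv ℝ φ y (Pi.single 0 1, 0)|
      + C * |fderiv ℝ φ y (Pi.single 1 1, 0)| + C * |fderiv ℝ φ y (0, 1)|
      + C * |fderiv ℝ φ y (Pi.single 2 1, 0)| :=
    (((hint _).add (hint _)).add (hint _)).add (hint _)
  have hle : ∀ a b c d a' b' c' d' : ℝ, |a| ≤ C → |b| ≤ C → |c| ≤ C → |d| ≤ C →
      ‖a * a' + b * b' + c * c' + d * d'‖ ≤ C * |a'| + C * |b'| + C * |c'| + C * |d'| := by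
    intro a b c d a' b' c' d' ha hb hc hd
    refine (norm_add₄_le).trans ?_
    simp only [norm_mul, Real.norm_eq_abs]
    gcongr
  have hmeas : ∀ K : Fin 4 → Spt → ℝ, (∀ i, Measurable (K i)) → AEStronglyMeasurable
      (fun y => K 0 (proj y) * fderiv ℝ φ y (Pi.single 0 1, 0)
      + K 1 (proj y) * fderiv ℝ φ y (Pi.single 1 1, 0) + K 2 (proj y) * fderiv ℝ φ y (0, 1)
      + K 3 (proj y) * fderiv ℝ φ y (Pi.single 2 1, 0)) volume := by
    intro K hK
    have h : ∀ i v, Measurable fun y => K i (proj y) * fderiv ℝ φ y v := fun i v =>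
      ((hK i).comp proj.continuous.measurable).mul (hcont v).measurable
    exact ((((h _ _).add (h _ _)).add (h _ _)).add (h _ _)).aestronglyMeasurable
  refine ⟨hbd.mono' (hmeas G hG) (Eventually.of_forall fun y =>
    hle _ _ _ _ _ _ _ _ (hGC _ _) (hGC _ _) (hGC _ _) (hGC _ _)), ?_⟩
  have hzero : ∀ n, ∫ y, (F n 0 (proj y) * fderiv ℝ φ y (Pi.single 0 1, 0)
      + F n 1 (proj y) * fderiv ℝ φ y (Pi.single 1 1, 0) + F n 2 (proj y) * fderiv ℝ φ y (0, 1)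
      + F n 3 (proj y) * fderiv ℝ φ y (Pi.single 2 1, 0)) = 0 := by
    intro n
    obtain ⟨i0, j0, e0⟩ := ibp (hF n 0) hφ hc (Pi.single 0 1, 0)
    obtain ⟨i1, j1, e1⟩ := ibp (hF n 1) hφ hc (Pi.single 1 1, 0)
    obtain ⟨i2, j2, e2⟩ := ibp (hF n 2) hφ hc (0, 1)
    obtain ⟨i3, j3, e3⟩ := ibp (hF n 3) hφ hc (Pi.single 2 1, 0)
    rw [integral_add ((i0.fun_add i1).fun_add i2) i3, integral_add (i0.fun_add i1) i2, integral_add i0 i1,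
      e0, e1, e2, e3]
    have hs : (∫ y, fderiv ℝ (F n 0) (proj y) (proj (Pi.single 0 1, 0)) * φ y) +
        (∫ y, fderiv ℝ (F n 1) (proj y) (proj (Pi.single 1 1, 0)) * φ y) +
        (∫ y, fderiv ℝ (F n 2) (proj y) (proj (0, 1)) * φ y) = 0 := by
      rw [← integral_add j0 j1, ← integral_add (j0.fun_add j1) j2]
      refine integral_eq_zero_of_ae (Eventually.of_forall fun y => ?_)
      have := hdiv n (proj y)
      simp only [pd] at this
      simp only [proj_single_zero, proj_single_one, proj_time, Pi.zero_apply]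
      rw [← add_mul, ← add_mul, this, zero_mul]
    have h3 : ∫ y, fderiv ℝ (F n 3) (proj y) (proj (Pi.single 2 1, 0)) * φ y = 0 := by
      simp [proj_single_two]
    linarith
  have hdom := tendsto_integral_of_dominated_convergence _
    (fun n => hmeas (F n) fun i => (hF n i).continuous.measurable) hbd
    (fun n => Eventually.of_forall fun y =>
      hle _ _ _ _ _ _ _ _ (hFC n _ _) (hFC n _ _) (hFC n _ _) (hFC n _ _))
    (by
      filter_upwards [ae_proj hlim] with y hy
      exact ((((hy 0).mul_const _).add ((hy 1).mul_const _)).add ((hy 2).mul_const _)).add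
        ((hy 3).mul_const _))
  simp only [hzero] at hdom
  exact (tendsto_nhds_unique hdom tendsto_const_nhds)

/-! ### The weak solution of the MHD equations -/

/-- There exist bounded measurable `u, B : ℝ³×ℝ → ℝ³` and `p : ℝ³×ℝ → ℝ`,
with `(u, B)` not a.e. zero, vanishing (in space) for a.e. time outside a bounded interval,
which form a weak solution of the ideal incompressible 3D MHD equations. -/
theorem stmt_1 :
    ∃ (u B : (Fin 3 → ℝ) × ℝ → Fin 3 → ℝ) (p : (Fin 3 → ℝ) × ℝ → ℝ)
      (I : Set ℝ),
      Measurable u ∧ Measurable B ∧ Measurable p ∧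
      (∃ C : ℝ, ∀ y, ‖u y‖ ≤ C ∧ ‖B y‖ ≤ C ∧ |p y| ≤ C) ∧
      Bornology.IsBounded I ∧
      -- (u, B) is not equal to zero almost everywhere
      ¬ (∀ᵐ y ∂volume, u y = 0 ∧ B y = 0) ∧
      -- u(·,t) = 0 and B(·,t) = 0 for almost every t outside I
      (∀ᵐ t : ℝ ∂volume, t ∉ I →
        ∀ᵐ x : Fin 3 → ℝ ∂volume, u (x, t) = 0 ∧ B (x, t) = 0) ∧
      -- weak momentum equation ∂ₜ u + div (u ⊗ u − B ⊗ B) + ∇p = 0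
      (∀ Ψ : (Fin 3 → ℝ) × ℝ → Fin 3 → ℝ, ContDiff ℝ (⊤ : ℕ∞) Ψ → HasCompactSupport Ψ →
        ∫ y, ((∑ i, u y i * fderiv ℝ Ψ y ((0 : Fin 3 → ℝ), (1 : ℝ)) i)
            + (∑ i, ∑ j, (u y i * u y j - B y i * B y j) *
                fderiv ℝ Ψ y (Pi.single j 1, (0 : ℝ)) i)
            + p y * ∑ j, fderiv ℝ Ψ y (Pi.single j 1, (0 : ℝ)) j) = 0) ∧
      -- weak induction (Faraday) equation ∂ₜ B − curl (u × B) = 0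
      (∀ Φ : (Fin 3 → ℝ) × ℝ → Fin 3 → ℝ, ContDiff ℝ (⊤ : ℕ∞) Φ → HasCompactSupport Φ →
        ∫ y, ((∑ i, B y i * fderiv ℝ Φ y ((0 : Fin 3 → ℝ), (1 : ℝ)) i)
            + ∑ i, cross3 (u y) (B y) i * curlx Φ y i) = 0) ∧
      -- weak form of div u = 0
      (∀ φ : (Fin 3 → ℝ) × ℝ → ℝ, ContDiff ℝ (⊤ : ℕ∞) φ → HasCompactSupport φ →
        ∫ y, (∑ j, u y j * fderiv ℝ φ y (Pi.single j 1, (0 : ℝ))) = 0) ∧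
      -- weak form of div B = 0
      (∀ φ : (Fin 3 → ℝ) × ℝ → ℝ, ContDiff ℝ (⊤ : ℕ∞) φ → HasCompactSupport φ →
        ∫ y, (∑ j, B y j * fderiv ℝ φ y (Pi.single j 1, (0 : ℝ))) = 0) := by
  obtain ⟨Z, W, hZ, hZb, hWm, hWb, hWs, hlim, hone, hW⟩ := exists_euler
  have hmp : Measurable (proj : (Fin 3 → ℝ) × ℝ → Spt) := proj.continuous.measurable
  have hpb : ∀ y, |W 2 y - W 0 y ^ 2| ≤ 6 := fun y => by
    have h0 := abs_le.1 (hWb 0 y)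
    have h2 := abs_le.1 (hWb 2 y)
    rw [abs_le]
    constructor <;> nlinarith
  refine ⟨fun y => ![W 0 (proj y), W 1 (proj y), 0], 0,
    fun y => W 2 (proj y) - W 0 (proj y) ^ 2, Set.Icc (-2) 2, ?_, measurable_const, ?_,
    ⟨6, fun y => ⟨?_, ?_, hpb _⟩⟩, Metric.isBounded_Icc _ _, ?_, ?_, ?_, ?_, ?_, ?_⟩
  · refine measurable_pi_lambda _ fun i => ?_
    fin_cases i
    exacts [(hWm 0).comp hmp, (hWm 1).comp hmp, measurable_const]
  · exact ((hWm 2).comp hmp).sub (((hWm 0).comp hmp).pow_const 2)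
  · rw [pi_norm_le_iff_of_nonneg (by norm_num)]
    intro i
    have h0 := hWb 0 (proj y)
    have h1 := hWb 1 (proj y)
    fin_cases i <;> simp <;> linarith
  · simp
  · intro h
    have hopen : IsOpen (proj ⁻¹' Metric.ball (0 : Spt) 2) :=
      Metric.isOpen_ball.preimage proj.continuous
    have hpos : 0 < volume (proj ⁻¹' Metric.ball (0 : Spt) 2) :=
      hopen.measure_pos volume ⟨0, by simp⟩
    refine hpos.ne' (measure_mono_null ?_ (ae_iff.1 (h.and (ae_proj hone))))
    rintro y hy ⟨⟨hu, -⟩, h1⟩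
    have e := h1 (Metric.ball_subset_closedBall hy)
    have u0 := congrFun hu 0
    have u1 := congrFun hu 1
    simp only [Matrix.cons_val_zero, Matrix.cons_val_one, Pi.zero_apply] at u0 u1
    rw [u0, u1] at e
    norm_num at e
  · refine Eventually.of_forall fun t ht => Eventually.of_forall fun x => ⟨?_, rfl⟩
    have hB : proj (x, t) ∉ Bset := fun h => by
      have h2 := (norm_le_pi_norm (proj (x, t)) 2).trans (mem_closedBall_zero_iff.1 h)
      exact ht (abs_le.1 h2)
    ext i
    fin_cases i <;> simp [hWs _ _ hB]
  · intro Ψ hΨ hc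
    have hd : ∀ y v i, fderiv ℝ Ψ y v i = fderiv ℝ (fun y => Ψ y i) y v := fun y v i => by
      have := hasFDerivAt_pi'.1 (hΨ.differentiable (by simp) y).hasFDerivAt i
      rw [this.fderiv]
      rfl
    have hΨi : ∀ i, ContDiff ℝ (⊤ : ℕ∞) fun y => Ψ y i := contDiff_pi.1 hΨ
    have hci : ∀ i, HasCompactSupport fun y => Ψ y i := fun i =>
      hc.comp_left (g := fun z : Fin 3 → ℝ => z i) rfl
    have hC0 : |(0 : ℝ)| ≤ 6 := by norm_num
    have hZ6 : ∀ n l y, |Z n l y| ≤ 6 := fun n l y => (hZb n l y).trans (by norm_num)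
    have hW6 : ∀ l y, |W l y| ≤ 6 := fun l y => (hWb l y).trans (by norm_num)
    obtain ⟨i0, e0⟩ := weak_limit (F := fun n => ![Z n 2, Z n 3, Z n 0, fun _ => 0])
      (G := ![W 2, W 3, W 0, fun _ => 0]) (C := 6)
      (fun n i => by
        fin_cases i
        exacts [(hZ n).smooth 2, (hZ n).smooth 3, (hZ n).smooth 0, contDiff_const])
      (fun n i y => by
        fin_cases i
        exacts [hZ6 n 2 y, hZ6 n 3 y, hZ6 n 0 y, hC0])
      (fun n y => by
        have := (hZ n).mom0 y
        simp only [Matrix.cons_val]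
        linarith)
      (fun i => by
        fin_cases i
        exacts [hWm 2, hWm 3, hWm 0, measurable_const])
      (fun i y => by
        fin_cases i
        exacts [hW6 2 y, hW6 3 y, hW6 0 y, hC0])
      (by
        filter_upwards [hlim] with y hy i
        fin_cases i
        exacts [hy 2, hy 3, hy 0, tendsto_const_nhds])
      (hΨi 0) (hci 0)
    obtain ⟨i1, e1⟩ := weak_limit (F := fun n => ![Z n 3, Z n 4, Z n 1, fun _ => 0])
      (G := ![W 3, W 4, W 1, fun _ => 0]) (C := 6)
      (fun n i => by
        fin_cases i
        exacts [(hZ n).smooth 3, (hZ n).smooth 4, (hZ n).smooth 1, contDiff_const])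
      (fun n i y => by
        fin_cases i
        exacts [hZ6 n 3 y, hZ6 n 4 y, hZ6 n 1 y, hC0])
      (fun n y => by
        have := (hZ n).mom1 y
        simp only [Matrix.cons_val]
        linarith)
      (fun i => by
        fin_cases i
        exacts [hWm 3, hWm 4, hWm 1, measurable_const])
      (fun i y => by
        fin_cases i
        exacts [hW6 3 y, hW6 4 y, hW6 1 y, hC0])
      (by
        filter_upwards [hlim] with y hy i
        fin_cases i
        exacts [hy 3, hy 4, hy 1, tendsto_const_nhds])
      (hΨi 1) (hci 1)
    obtain ⟨i2, e2⟩ := weak_limit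
      (F := fun n => ![fun _ => 0, fun _ => 0, fun _ => 0, fun y => Z n 2 y - Z n 0 y ^ 2])
      (G := ![fun _ => 0, fun _ => 0, fun _ => 0, fun y => W 2 y - W 0 y ^ 2]) (C := 6)
      (fun n i => by
        fin_cases i
        exacts [contDiff_const, contDiff_const, contDiff_const,
          ((hZ n).smooth 2).sub (((hZ n).smooth 0).pow 2)])
      (fun n i y => by
        have h0 := abs_le.1 (hZb n 0 y)
        have h2 := abs_le.1 (hZb n 2 y)
        have h3 : |Z n 2 y - Z n 0 y ^ 2| ≤ 6 := by
          rw [abs_le]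
          constructor <;> nlinarith
        fin_cases i
        exacts [hC0, hC0, hC0, h3])
      (fun n y => by simp [pd])
      (fun i => by
        fin_cases i
        exacts [measurable_const, measurable_const, measurable_const,
          (hWm 2).sub ((hWm 0).pow_const 2)])
      (fun i y => by
        fin_cases i
        exacts [hC0, hC0, hC0, hpb y])
      (by
        filter_upwards [hlim] with y hy i
        fin_cases i
        exacts [tendsto_const_nhds, tendsto_const_nhds, tendsto_const_nhds,
          (hy 2).sub ((hy 0).pow 2)])
      (hΨi 2) (hci 2)
    have e := integral_add (i0.fun_add i1) i2
    rw [integral_add i0 i1, e0, e1, e2, add_zero, add_zero] at e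
    refine (integral_congr_ae ?_).trans e
    filter_upwards [ae_proj hW] with y hy
    simp only [hd, Fin.sum_univ_three, Matrix.cons_val, Pi.zero_apply, mul_zero, zero_mul,
      sub_zero, add_zero, zero_add, hy.1, hy.2]
    ring
  · intro Φ _ _
    simp [cross3, Fin.sum_univ_three]
  · intro φ hφ hc
    obtain ⟨-, e⟩ := weak_limit (F := fun n => ![Z n 0, Z n 1, fun _ => 0, fun _ => 0])
      (G := ![W 0, W 1, fun _ => 0, fun _ => 0]) (C := 2)
      (fun n i => by
        fin_cases i
        exacts [(hZ n).smooth 0, (hZ n).smooth 1, contDiff_const, contDiff_const])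
      (fun n i y => by
        have h0 : |(0 : ℝ)| ≤ 2 := by norm_num
        fin_cases i
        exacts [hZb n 0 y, hZb n 1 y, h0, h0])
      (fun n y => by
        have := (hZ n).div y
        simpa [pd] using this)
      (fun i => by
        fin_cases i
        exacts [hWm 0, hWm 1, measurable_const, measurable_const])
      (fun i y => by
        have h0 : |(0 : ℝ)| ≤ 2 := by norm_num
        fin_cases i
        exacts [hWb 0 y, hWb 1 y, h0, h0])
      (by
        filter_upwards [hlim] with y hy i
        fin_cases i
        exacts [hy 0, hy 1, tendsto_const_nhds, tendsto_const_nhds])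
      hφ hc
    refine (integral_congr_ae (Eventually.of_forall fun y => ?_)).trans e
    simp [Fin.sum_univ_three]
  · intro φ _ _
    simp
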